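/- arXiv:2511.08099 — 4 statements merged into one kernel-verified Lean document; each statement's English description precedes it below -/
import Mathlib

section
/- Let k ∈ {7, 8, 10, 11, 12, 13} and let a ≥ 10864 be a positive integer with k·a² + 4 = r² a perfect square. Set b = ka and let c be one of c₁⁺ = a + b + 2r, c₂⁺ = (ab+4)(a+b+2r) − 4r, c₂⁻ = (ab+4)(a+b−2r) + 4r; let s, t be the positive integers with ac + 4 = s² and bc + 4 = t². If P_l = Q_m has a solution (l, m) with m ≥ 3, then l / log(e·l) < 3.34·10¹³ · (log(8.09·c²))² when the solution is of Type 1, and l / log(e·l) < 6.63·10¹³ · (log(8.09·c²))² when the solution is of Type 2. -/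
/-!
A Thue–Siegel argument with Padé approximants. In closed form `P_l = Q_m` reads
`A τ' ^ l + A' τ ^ l = B β ^ m + B' β' ^ m`, where `τ, τ'` and `β, β'` are conjugate units of
`ℚ(√k)` and `ℚ(√(ac))`. The special shape of `c` gives
`√k s = (√k + σ) τ' ^ e + (√k - σ) τ ^ e` with `e ≤ 2` and `σ = ±1`, so that a suitable multiple `g`
of `β` is extremely close to `1`, while the same multiple `h` of `β'` is close to `0`.

Evaluating the diagonal Padé approximant of degree `3n` to the `m`-th power function at `g`, with
`m = 7n + ρ`, and replacing `B g ^ m` by its near-equal `α`, a multiple of `τ' ^ l`, produces a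
nonzero algebraic integer of `ℚ(√k, √(ac))` whose four conjugates have product less than `1` in
absolute value as soon as `2 ^ n > c ^ 54`. Since that product is a nonzero integer, `m`, and with
it `l`, is bounded by a multiple of `log c`.
-/

open Finset

section PadeIdentity

variable {R : Type*} [CommRing R]

/-- The Padé numerator for the `m`-th power function, homogenised: `padePoly j (m + j) A B` and
`padePoly j (m + j) B A` have degree `j`, and their ratio approximates `(B / A) ^ m` to order
`2 * j + 1` at `A = B`. -/
def padePoly (j M : ℕ) (A B : R) : R :=
  ∑ i ∈ range (j + 1), ((2 * j - i).choose j : R) * M.choose i * (B - A) ^ i * A ^ (j - i)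

/-- The remainder of the Padé approximation. For `0 < j` the truncated subtraction `n - j - 1`
makes every term with `n ≤ 2 * j` vanish. -/
def padeRemainder (j M : ℕ) (A B : R) : R :=
  ∑ n ∈ range (M + 1), (M.choose n : R) * (n - j - 1).choose j * (A - B) ^ n * B ^ (M - n)

lemma ringChoose_neg_natCast_add_one (q p : ℕ) :
    Ring.choose (-((q : ℤ) + 1)) p = (-1) ^ p * ((q + p).choose p : ℤ) := by
  rw [Ring.choose_neg, show (q : ℤ) + 1 + p - 1 = ((q + p : ℕ) : ℤ) by push_cast; ring,
    Ring.choose_natCast]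
  simp [Units.smul_def, Int.coe_negOnePow_natCast]

lemma sum_neg_one_pow_mul_choose_mul_choose (j n : ℕ) :
    ∑ i ∈ range (j + 1), (-1 : ℤ) ^ (j - i) * (2 * j - i).choose j * n.choose i =
      Ring.choose ((n : ℤ) - j - 1) j := by
  rw [show (n : ℤ) - j - 1 = n + -((j : ℤ) + 1) by ring, Ring.add_choose_eq _ (Commute.all _ _),
    Finset.Nat.sum_antidiagonal_eq_sum_range_succ_mk]
  refine sum_congr rfl fun i hi => ?_
  have hij : i ≤ j := mem_range_succ_iff.mp hi
  have hsymm : (j + (j - i)).choose (j - i) = (2 * j - i).choose j := by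
    rw [show 2 * j - i = j + (j - i) by omega, Nat.choose_symm_add]
  rw [ringChoose_neg_natCast_add_one, Ring.choose_natCast, hsymm]
  ring

lemma ringChoose_sub_sub_one {j : ℕ} (hj : 0 < j) (n : ℕ) :
    Ring.choose ((n : ℤ) - j - 1) j =
      (-1) ^ j * ((2 * j - n).choose j : ℤ) + (n - j - 1).choose j := by
  rcases le_or_gt n j with hn | hn
  · rw [show (n : ℤ) - j - 1 = -(((j - n : ℕ) : ℤ) + 1) by push_cast [hn]; ring,
      ringChoose_neg_natCast_add_one, show j - n + j = 2 * j - n by omega,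
      Nat.choose_eq_zero_of_lt (show n - j - 1 < j by omega), Nat.cast_zero, add_zero]
  · rw [show (n : ℤ) - j - 1 = ((n - j - 1 : ℕ) : ℤ) by omega, Ring.choose_natCast,
      Nat.choose_eq_zero_of_lt (show 2 * j - n < j by omega), Nat.cast_zero, mul_zero, zero_add]

lemma sum_neg_one_pow_choose_eq {j : ℕ} (hj : 0 < j) (n : ℕ) :
    ∑ i ∈ range (j + 1), (-1 : R) ^ i * (2 * j - i).choose j * n.choose i =
      (2 * j - n).choose j + (-1) ^ j * (n - j - 1).choose j := by
  have hsign : ∀ i ∈ range (j + 1), (-1 : ℤ) ^ i * (2 * j - i).choose j * n.choose i =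
      (-1) ^ j * ((-1) ^ (j - i) * (2 * j - i).choose j * n.choose i) := fun i hi => by
    have hij : i ≤ j := mem_range_succ_iff.mp hi
    have : (-1 : ℤ) ^ i = (-1) ^ j * (-1) ^ (j - i) := by
      rw [← pow_add, show j + (j - i) = i + 2 * (j - i) by omega, pow_add, pow_mul, neg_one_sq,
        one_pow, mul_one]
    rw [this]
    ring
  have hint : ∑ i ∈ range (j + 1), (-1 : ℤ) ^ i * (2 * j - i).choose j * n.choose i =
      (2 * j - n).choose j + (-1) ^ j * (n - j - 1).choose j := by
    rw [sum_congr rfl hsign, ← mul_sum, sum_neg_one_pow_mul_choose_mul_choose,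
      ringChoose_sub_sub_one hj, mul_add, ← mul_assoc, ← mul_pow, neg_one_mul, neg_neg, one_pow,
      one_mul]
  simpa using congrArg (Int.cast (R := R)) hint

lemma choose_mul_pow_mul_add_pow {M i : ℕ} (hi : i ≤ M) (y B : R) :
    (M.choose i : R) * y ^ i * (y + B) ^ (M - i) =
      ∑ n ∈ range (M + 1), (M.choose n : R) * n.choose i * y ^ n * B ^ (M - n) := by
  have hlow : ∑ n ∈ range i, (M.choose n : R) * n.choose i * y ^ n * B ^ (M - n) = 0 :=
    sum_eq_zero fun n hn => by simp [Nat.choose_eq_zero_of_lt (mem_range.mp hn)]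
  rw [show M + 1 = i + (M - i + 1) by omega, sum_range_add, hlow, zero_add, add_pow, mul_sum]
  refine sum_congr rfl fun n _ => ?_
  have hchoose : (M.choose (i + n) : R) * (i + n).choose i = M.choose i * (M - i).choose n := by
    rw [← Nat.cast_mul, ← Nat.cast_mul, Nat.choose_mul (Nat.le_add_right i n),
      Nat.add_sub_cancel_left]
  rw [hchoose, Nat.sub_sub, pow_add]
  ring

lemma pow_mul_padePoly_left (j m : ℕ) (A B : R) :
    A ^ m * padePoly j (m + j) A B = ∑ n ∈ range (m + j + 1),
      (∑ i ∈ range (j + 1), (-1 : R) ^ i * (2 * j - i).choose j * n.choose i) *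
        ((m + j).choose n * (A - B) ^ n * B ^ (m + j - n)) := by
  simp only [padePoly, mul_sum, sum_mul]
  rw [sum_comm]
  refine sum_congr rfl fun i hi => ?_
  have hij : i ≤ j := mem_range_succ_iff.mp hi
  have hshift := choose_mul_pow_mul_add_pow (show i ≤ m + j by omega) (A - B) B
  rw [sub_add_cancel, show m + j - i = m + (j - i) by omega, pow_add] at hshift
  calc A ^ m * (((2 * j - i).choose j : R) * (m + j).choose i * (B - A) ^ i * A ^ (j - i))
      = (-1) ^ i * (2 * j - i).choose j *
          ((m + j).choose i * (A - B) ^ i * (A ^ m * A ^ (j - i))) := by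
        rw [← neg_sub A B, neg_pow (A - B)]
        ring
    _ = _ := by
        rw [hshift, mul_sum]
        exact sum_congr rfl fun n _ => by ring

lemma pow_mul_padePoly_right {j : ℕ} (hj : 0 < j) (m : ℕ) (A B : R) :
    B ^ m * padePoly j (m + j) B A = ∑ n ∈ range (m + j + 1),
      ((2 * j - n).choose j : R) * ((m + j).choose n * (A - B) ^ n * B ^ (m + j - n)) := by
  have hhigh : ∑ n ∈ range m, ((2 * j - (j + 1 + n)).choose j : R) * ((m + j).choose (j + 1 + n) *
      (A - B) ^ (j + 1 + n) * B ^ (m + j - (j + 1 + n))) = 0 :=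
    sum_eq_zero fun n _ => by
      rw [Nat.choose_eq_zero_of_lt (show 2 * j - (j + 1 + n) < j by omega), Nat.cast_zero, zero_mul]
  rw [show m + j + 1 = j + 1 + m by omega, sum_range_add, hhigh, add_zero, padePoly, mul_sum]
  refine sum_congr rfl fun i hi => ?_
  have hij : i ≤ j := mem_range_succ_iff.mp hi
  rw [show m + j - i = m + (j - i) by omega, pow_add]
  ring

theorem pow_mul_padePoly_sub_pow_mul_padePoly {j : ℕ} (hj : 0 < j) (m : ℕ) (A B : R) :
    A ^ m * padePoly j (m + j) A B - B ^ m * padePoly j (m + j) B A =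
      (-1) ^ j * padeRemainder j (m + j) A B := by
  rw [pow_mul_padePoly_left, pow_mul_padePoly_right hj, ← sum_sub_distrib, padeRemainder, mul_sum]
  refine sum_congr rfl fun n _ => ?_
  rw [sum_neg_one_pow_choose_eq hj]
  ring

lemma padePoly_mul_mul (j M : ℕ) (c A B : R) :
    padePoly j M (c * A) (c * B) = c ^ j * padePoly j M A B := by
  simp only [padePoly, mul_sum]
  refine sum_congr rfl fun i hi => ?_
  have hpow : c ^ j = c ^ i * c ^ (j - i) := by
    rw [← pow_add, Nat.add_sub_cancel' (mem_range_succ_iff.mp hi)]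
  rw [← mul_sub, mul_pow, mul_pow, hpow]
  ring

lemma map_padePoly {S : Type*} [CommRing S] (f : R →+* S) (j M : ℕ) (A B : R) :
    f (padePoly j M A B) = padePoly j M (f A) (f B) := by
  simp [padePoly]

lemma padePoly_mem (S : Subring R) (j M : ℕ) {A B : R} (hA : A ∈ S) (hB : B ∈ S) :
    padePoly j M A B ∈ S :=
  sum_mem fun _ _ => mul_mem (mul_mem (mul_mem (natCast_mem S _) (natCast_mem S _))
    (pow_mem (sub_mem hB hA) _)) (pow_mem hA _)

end PadeIdentity

section PadeBounds

lemma choose_mul_one_sub_pow_mul_pow_le_one {N j : ℕ} (hj : j ≤ N) {v : ℝ} (hv : 0 ≤ v)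
    (hv' : v ≤ 1) : (N.choose j : ℝ) * (1 - v) ^ j * v ^ (N - j) ≤ 1 := by
  have : 0 ≤ 1 - v := sub_nonneg.mpr hv'
  calc (N.choose j : ℝ) * (1 - v) ^ j * v ^ (N - j)
      = (1 - v) ^ j * v ^ (N - j) * N.choose j := by ring
    _ ≤ ∑ i ∈ range (N + 1), (1 - v) ^ i * v ^ (N - i) * N.choose i :=
        single_le_sum (f := fun i => (1 - v) ^ i * v ^ (N - i) * (N.choose i : ℝ))
          (fun i _ => by positivity) (mem_range_succ_iff.mpr hj)
    _ = 1 := by rw [← add_pow, sub_add_cancel, one_pow]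

lemma choose_two_mul_sub_le {i j : ℕ} (hij : i ≤ j) {v : ℝ} (hv : 0 < v) (hv' : v < 1) :
    ((2 * j - i).choose j : ℝ) ≤ v ^ i / (v * (1 - v)) ^ j := by
  have : 0 < 1 - v := sub_pos.mpr hv'
  have hle := choose_mul_one_sub_pow_mul_pow_le_one (show j ≤ 2 * j - i by omega) hv.le hv'.le
  rw [show 2 * j - i - j = j - i by omega] at hle
  have hpow : v ^ j = v ^ (j - i) * v ^ i := by rw [← pow_add, Nat.sub_add_cancel hij]
  rw [le_div_iff₀ (by positivity)]
  calc ((2 * j - i).choose j : ℝ) * (v * (1 - v)) ^ j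
      = (2 * j - i).choose j * (1 - v) ^ j * v ^ (j - i) * v ^ i := by rw [mul_pow, hpow]; ring
    _ ≤ 1 * v ^ i := by gcongr
    _ = v ^ i := one_mul _

theorem abs_padePoly_le {j M : ℕ} (hjM : j ≤ M) {A B Y ξ v : ℝ} (hY : 0 ≤ Y) (hξ : 0 ≤ ξ)
    (hA : |A| ≤ Y) (hBA : |B - A| ≤ ξ * Y) (hv : 0 < v) (hv' : v < 1) :
    |padePoly j M A B| ≤ (Y / (v * (1 - v))) ^ j * (1 + ξ * v) ^ M := by
  have : 0 < 1 - v := sub_pos.mpr hv'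
  have hterm : ∀ i ∈ range (j + 1),
      |((2 * j - i).choose j : ℝ) * M.choose i * (B - A) ^ i * A ^ (j - i)| ≤
        (Y / (v * (1 - v))) ^ j * ((ξ * v) ^ i * 1 ^ (M - i) * M.choose i) := fun i hi => by
    have hij : i ≤ j := mem_range_succ_iff.mp hi
    have hpow : Y ^ j = Y ^ i * Y ^ (j - i) := by rw [← pow_add, Nat.add_sub_cancel' hij]
    rw [abs_mul, abs_mul, abs_mul, abs_pow, abs_pow, Nat.abs_cast, Nat.abs_cast]
    calc ((2 * j - i).choose j : ℝ) * M.choose i * |B - A| ^ i * |A| ^ (j - i)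
        ≤ v ^ i / (v * (1 - v)) ^ j * M.choose i * (ξ * Y) ^ i * Y ^ (j - i) := by
          gcongr
          exact choose_two_mul_sub_le hij hv hv'
      _ = (Y / (v * (1 - v))) ^ j * ((ξ * v) ^ i * 1 ^ (M - i) * M.choose i) := by
          rw [div_pow, hpow, mul_pow ξ, mul_pow ξ, one_pow]
          ring
  calc |padePoly j M A B|
      ≤ ∑ i ∈ range (j + 1),
          (Y / (v * (1 - v))) ^ j * ((ξ * v) ^ i * 1 ^ (M - i) * M.choose i) :=
        (abs_sum_le_sum_abs _ _).trans (sum_le_sum hterm)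
    _ ≤ ∑ i ∈ range (M + 1),
          (Y / (v * (1 - v))) ^ j * ((ξ * v) ^ i * 1 ^ (M - i) * M.choose i) :=
        sum_le_sum_of_subset_of_nonneg (range_mono (by omega)) fun i _ _ => by positivity
    _ = (Y / (v * (1 - v))) ^ j * (1 + ξ * v) ^ M := by
        rw [← mul_sum, ← add_pow, add_comm 1]

lemma choose_sub_mul_pow_le {j n : ℕ} (hn : 2 * j < n) {w : ℝ} (hw : 0 ≤ w) (hw' : w < 1) :
    ((n - j - 1).choose j : ℝ) * w ^ (n - (2 * j + 1)) ≤ (1 - w)⁻¹ ^ j := by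
  have : 0 < 1 - w := sub_pos.mpr hw'
  have hle := choose_mul_one_sub_pow_mul_pow_le_one (show j ≤ n - j - 1 by omega) hw hw'.le
  rw [show n - j - 1 - j = n - (2 * j + 1) by omega] at hle
  rw [inv_pow, ← one_div, le_div_iff₀ (by positivity)]
  linarith

/-- Comparing the remainder termwise with the binomial expansion of `(B + ζ * B) ^ M`. -/
theorem padeRemainder_le {j : ℕ} (hj : 0 < j) (M : ℕ) {A B w ζ : ℝ} (hB : 0 < B) (hζ : 0 < ζ)
    (hw : 0 ≤ w) (hw' : w < 1) (hBA : B ≤ A) (hA : A - B ≤ w * (ζ * B)) :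
    padeRemainder j M A B ≤
      (1 - w)⁻¹ ^ j * ((A - B) / (ζ * B)) ^ (2 * j + 1) * ((1 + ζ) * B) ^ M := by
  have : 0 < 1 - w := sub_pos.mpr hw'
  have : 0 ≤ A - B := sub_nonneg.mpr hBA
  have hexpand : ((1 + ζ) * B) ^ M =
      ∑ n ∈ range (M + 1), (ζ * B) ^ n * B ^ (M - n) * M.choose n := by
    rw [← add_pow]
    ring
  rw [hexpand, mul_sum, padeRemainder]
  refine sum_le_sum fun n _ => ?_
  rcases le_or_gt n (2 * j) with hn | hn
  · rw [Nat.choose_eq_zero_of_lt (show n - j - 1 < j by omega), Nat.cast_zero, mul_zero, zero_mul,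
      zero_mul]
    positivity
  have hsplit : ∀ x : ℝ, x ^ n = x ^ (2 * j + 1) * x ^ (n - (2 * j + 1)) := fun x => by
    rw [← pow_add, Nat.add_sub_cancel' hn]
  calc (M.choose n : ℝ) * (n - j - 1).choose j * (A - B) ^ n * B ^ (M - n)
      ≤ M.choose n * (n - j - 1).choose j *
          ((A - B) ^ (2 * j + 1) * (w * (ζ * B)) ^ (n - (2 * j + 1))) * B ^ (M - n) := by
        rw [hsplit (A - B)]
        gcongr
    _ = M.choose n * ((n - j - 1).choose j * w ^ (n - (2 * j + 1))) *
          ((A - B) ^ (2 * j + 1) * (ζ * B) ^ (n - (2 * j + 1))) * B ^ (M - n) := by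
        rw [mul_pow w]
        ring
    _ ≤ M.choose n * (1 - w)⁻¹ ^ j *
          ((A - B) ^ (2 * j + 1) * (ζ * B) ^ (n - (2 * j + 1))) * B ^ (M - n) := by
        gcongr
        exact choose_sub_mul_pow_le hn hw hw'
    _ = (1 - w)⁻¹ ^ j * ((A - B) / (ζ * B)) ^ (2 * j + 1) *
          ((ζ * B) ^ n * B ^ (M - n) * M.choose n) := by
        rw [hsplit (ζ * B), div_pow]
        field_simp

theorem le_padeRemainder {j M : ℕ} (hjM : 2 * j + 1 ≤ M) {A B : ℝ} (hB : 0 ≤ B) (hBA : B ≤ A) :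
    (A - B) ^ (2 * j + 1) * B ^ (M - (2 * j + 1)) ≤ padeRemainder j M A B := by
  have : 0 ≤ A - B := sub_nonneg.mpr hBA
  have hchoose : (1 : ℝ) ≤ M.choose (2 * j + 1) := by exact_mod_cast Nat.choose_pos hjM
  calc (A - B) ^ (2 * j + 1) * B ^ (M - (2 * j + 1))
      ≤ M.choose (2 * j + 1) * ((A - B) ^ (2 * j + 1) * B ^ (M - (2 * j + 1))) :=
        le_mul_of_one_le_left (by positivity) hchoose
    _ = M.choose (2 * j + 1) * (2 * j + 1 - j - 1).choose j * (A - B) ^ (2 * j + 1) *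
          B ^ (M - (2 * j + 1)) := by
        rw [show 2 * j + 1 - j - 1 = j by omega, Nat.choose_self]
        ring
    _ ≤ padeRemainder j M A B :=
        single_le_sum (f := fun n => (M.choose n : ℝ) * (n - j - 1).choose j * (A - B) ^ n *
          B ^ (M - n)) (fun n _ => by positivity) (mem_range_succ_iff.mpr hjM)

end PadeBounds

section AuxiliaryNumber

variable {R : Type*} [CommRing R]

/-- The auxiliary number of the Padé method: the Padé approximation of `(B / A) ^ m`, paired with
the weights `w₁` and `w₂`. It is small when `w₂` is close to `B ^ m * w₁`. -/
def auxNumber (j m : ℕ) (A B w₁ w₂ : R) : R :=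
  padePoly j (m + j) A B * (A ^ m * w₁) - padePoly j (m + j) B A * w₂

lemma auxNumber_mul (j m : ℕ) (c A B w₁ w₂ : R) :
    auxNumber j m (c * A) (c * B) w₁ (c ^ m * w₂) = c ^ (m + j) * auxNumber j m A B w₁ w₂ := by
  rw [auxNumber, auxNumber, padePoly_mul_mul, padePoly_mul_mul]
  ring

lemma auxNumber_neg_neg (j m : ℕ) (A B w₁ w₂ : R) :
    auxNumber j m A B (-w₁) (-w₂) = -auxNumber j m A B w₁ w₂ := by
  rw [auxNumber, auxNumber]
  ring

lemma map_auxNumber {S : Type*} [CommRing S] (f : R →+* S) (j m : ℕ) (A B w₁ w₂ : R) :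
    f (auxNumber j m A B w₁ w₂) = auxNumber j m (f A) (f B) (f w₁) (f w₂) := by
  simp only [auxNumber, map_sub, map_mul, map_pow, map_padePoly]

lemma auxNumber_mem (S : Subring R) (j m : ℕ) {A B w₁ w₂ : R} (hA : A ∈ S) (hB : B ∈ S)
    (hw₁ : w₁ ∈ S) (hw₂ : w₂ ∈ S) : auxNumber j m A B w₁ w₂ ∈ S :=
  sub_mem (mul_mem (padePoly_mem S _ _ hA hB) (mul_mem (pow_mem hA _) hw₁))
    (mul_mem (padePoly_mem S _ _ hB hA) hw₂)

lemma auxNumber_eq_padeRemainder {j : ℕ} (hj : 0 < j) (m : ℕ) (A B w₁ w₂ : R) :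
    auxNumber j m A B w₁ w₂ = (-1) ^ j * padeRemainder j (m + j) A B * w₁ +
      padePoly j (m + j) B A * (B ^ m * w₁ - w₂) := by
  rw [← pow_mul_padePoly_sub_pow_mul_padePoly hj, auxNumber]
  ring

theorem abs_auxNumber_le {j m : ℕ} {A B w₁ w₂ C Y ξ v : ℝ} (hξ : 0 ≤ ξ) (hA : |A| ≤ Y)
    (hB : |B| ≤ Y) (hAB : |A - B| ≤ ξ * Y) (hw₁ : |A ^ m * w₁| ≤ C) (hw₂ : |w₂| ≤ C)
    (hv : 0 < v) (hv' : v < 1) :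
    |auxNumber j m A B w₁ w₂| ≤ 2 * C * (Y / (v * (1 - v))) ^ j * (1 + ξ * v) ^ (m + j) := by
  have hY : 0 ≤ Y := (abs_nonneg A).trans hA
  have : 0 ≤ C := (abs_nonneg w₂).trans hw₂
  have hpA := abs_padePoly_le (Nat.le_add_left j m) hY hξ hA (abs_sub_comm A B ▸ hAB) hv hv'
  have hpB := abs_padePoly_le (Nat.le_add_left j m) hY hξ hB hAB hv hv'
  calc |auxNumber j m A B w₁ w₂|
      ≤ |padePoly j (m + j) A B| * |A ^ m * w₁| + |padePoly j (m + j) B A| * |w₂| := by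
        rw [auxNumber, ← abs_mul, ← abs_mul]
        exact abs_sub _ _
    _ ≤ (Y / (v * (1 - v))) ^ j * (1 + ξ * v) ^ (m + j) * C +
          (Y / (v * (1 - v))) ^ j * (1 + ξ * v) ^ (m + j) * C :=
        add_le_add (mul_le_mul hpA hw₁ (abs_nonneg _) ((abs_nonneg _).trans hpA))
          (mul_le_mul hpB hw₂ (abs_nonneg _) ((abs_nonneg _).trans hpB))
    _ = 2 * C * (Y / (v * (1 - v))) ^ j * (1 + ξ * v) ^ (m + j) := by ring

end AuxiliaryNumber

section Biquadratic

/-- `κ` and `Δ` are square roots of `k` and `n`, and `ℚ(κ, Δ)` has degree four over `ℚ`. -/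
structure IsBiquadratic (k n : ℤ) (κ Δ : ℝ) : Prop where
  sq_left : κ ^ 2 = k
  sq_right : Δ ^ 2 = n
  not_isSquare_left : ¬IsSquare k
  not_isSquare_right : ¬IsSquare n
  not_isSquare_mul : ¬IsSquare (k * n)

lemma eq_zero_of_add_mul_sqrt_eq_zero {k : ℤ} {κ : ℝ} (hκ : κ ^ 2 = k) (hk : ¬IsSquare k)
    {x y : ℚ} (h : (x : ℝ) + y * κ = 0) : x = 0 ∧ y = 0 := by
  by_cases hy : y = 0
  · subst hy
    exact ⟨by simpa using h, rfl⟩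
  refine absurd (Rat.isSquare_intCast_iff.mp ⟨-x / y, ?_⟩) hk
  have hy' : (y : ℝ) ≠ 0 := Rat.cast_ne_zero.mpr hy
  have hκ' : κ = ((-x / y : ℚ) : ℝ) := by
    push_cast
    field_simp
    linarith
  rw [hκ'] at hκ
  rw [← sq]
  exact_mod_cast hκ.symm

variable {k n : ℤ} {κ Δ : ℝ}

namespace IsBiquadratic

lemma ne_add_mul (h : IsBiquadratic k n κ Δ) (p q : ℚ) : Δ ≠ p + q * κ := by
  intro hΔ
  have hsq := h.sq_right
  rw [hΔ] at hsq
  have hzero : ((p ^ 2 + k * q ^ 2 - n : ℚ) : ℝ) + ((2 * p * q : ℚ) : ℝ) * κ = 0 := by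
    push_cast
    linear_combination hsq - (q : ℝ) ^ 2 * h.sq_left
  obtain ⟨hrat, hpq⟩ := eq_zero_of_add_mul_sqrt_eq_zero h.sq_left h.not_isSquare_left hzero
  rcases (by simpa using hpq : p = 0 ∨ q = 0) with rfl | rfl
  · refine h.not_isSquare_mul (Rat.isSquare_intCast_iff.mp ⟨k * q, ?_⟩)
    push_cast
    linear_combination -(k : ℚ) * hrat
  · refine h.not_isSquare_right (Rat.isSquare_intCast_iff.mp ⟨p, ?_⟩)
    linear_combination -hrat

lemma eq_zero_of_eq_zero (h : IsBiquadratic k n κ Δ) {x y z w : ℚ}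
    (hzero : (x : ℝ) + y * κ + z * Δ + w * (κ * Δ) = 0) : x = 0 ∧ y = 0 ∧ z = 0 ∧ w = 0 := by
  by_cases hzw : z = 0 ∧ w = 0
  · obtain ⟨rfl, rfl⟩ := hzw
    obtain ⟨hx, hy⟩ := eq_zero_of_add_mul_sqrt_eq_zero h.sq_left h.not_isSquare_left
      (x := x) (y := y) (by simpa using hzero)
    exact ⟨hx, hy, rfl, rfl⟩
  have hindep : ∀ w' : ℚ, (w' = 0 → w = 0) → (z : ℝ) + w' * κ ≠ 0 := fun w' hw' hzw' =>
    have := eq_zero_of_add_mul_sqrt_eq_zero h.sq_left h.not_isSquare_left hzw'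
    hzw ⟨this.1, hw' this.2⟩
  have hN : ((z ^ 2 - k * w ^ 2 : ℚ) : ℝ) ≠ 0 := by
    have hprod := mul_ne_zero (hindep w id) (hindep (-w) neg_eq_zero.mp)
    push_cast at hprod ⊢
    rw [← h.sq_left]
    exact fun hz => hprod (by linear_combination hz)
  refine absurd ?_ (h.ne_add_mul (-(x * z - k * y * w) / (z ^ 2 - k * w ^ 2))
    (-(y * z - x * w) / (z ^ 2 - k * w ^ 2)))
  push_cast at hN ⊢
  field_simp
  linear_combination (z - w * κ) * hzero + ((w : ℝ) ^ 2 * Δ + w * y) * h.sq_left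

lemma units_mul (h : IsBiquadratic k n κ Δ) (ε₁ ε₂ : ℤˣ) :
    IsBiquadratic k n (ε₁ * κ) (ε₂ * Δ) where
  sq_left := by rcases Int.units_eq_one_or ε₁ with rfl | rfl <;> simp [h.sq_left]
  sq_right := by rcases Int.units_eq_one_or ε₂ with rfl | rfl <;> simp [h.sq_right]
  not_isSquare_left := h.not_isSquare_left
  not_isSquare_right := h.not_isSquare_right
  not_isSquare_mul := h.not_isSquare_mul

/-- The ring of vectors of conjugates of the elements of `ℚ(κ, Δ)`, indexed by the signs that an
automorphism attaches to `κ` and `Δ`. -/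
def conjugates (h : IsBiquadratic k n κ Δ) : Subring (ℤˣ × ℤˣ → ℝ) where
  carrier := {v | ∃ x y z w : ℚ, ∀ ε : ℤˣ × ℤˣ,
    v ε = x + y * (ε.1 * κ) + z * (ε.2 * Δ) + w * (ε.1 * κ * (ε.2 * Δ))}
  mul_mem' := by
    rintro u v ⟨x, y, z, w, hu⟩ ⟨x', y', z', w', hv⟩
    refine ⟨x * x' + k * y * y' + n * z * z' + k * n * w * w',
      x * y' + y * x' + n * z * w' + n * w * z', x * z' + z * x' + k * y * w' + k * w * y',
      x * w' + w * x' + y * z' + z * y', fun ε => ?_⟩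
    have hε := h.units_mul ε.1 ε.2
    rw [Pi.mul_apply, hu, hv]
    push_cast
    rw [← hε.sq_left, ← hε.sq_right]
    ring
  add_mem' := by
    rintro u v ⟨x, y, z, w, hu⟩ ⟨x', y', z', w', hv⟩
    refine ⟨x + x', y + y', z + z', w + w', fun ε => ?_⟩
    rw [Pi.add_apply, hu, hv]
    push_cast
    ring
  one_mem' := ⟨1, 0, 0, 0, fun _ => by simp⟩
  zero_mem' := ⟨0, 0, 0, 0, fun _ => by simp⟩
  neg_mem' := by
    rintro u ⟨x, y, z, w, hu⟩
    refine ⟨-x, -y, -z, -w, fun ε => ?_⟩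
    rw [Pi.neg_apply, hu]
    push_cast
    ring

lemma conjugate_ne_zero (h : IsBiquadratic k n κ Δ) {v : ℤˣ × ℤˣ → ℝ} (hv : v ∈ h.conjugates)
    (hne : v 1 ≠ 0) (ε : ℤˣ × ℤˣ) : v ε ≠ 0 := by
  obtain ⟨x, y, z, w, hv⟩ := hv
  intro hzero
  rw [hv] at hzero
  obtain ⟨rfl, rfl, rfl, rfl⟩ := (h.units_mul ε.1 ε.2).eq_zero_of_eq_zero hzero
  exact hne (by simp [hv])

lemma prod_conjugates_rational (h : IsBiquadratic k n κ Δ) {v : ℤˣ × ℤˣ → ℝ}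
    (hv : v ∈ h.conjugates) : ∃ q : ℚ, ∏ ε, v ε = q := by
  obtain ⟨x, y, z, w, hv⟩ := hv
  refine ⟨(x ^ 2 + k * y ^ 2 - n * (z ^ 2 + k * w ^ 2)) ^ 2 -
    k * (2 * x * y - 2 * n * z * w) ^ 2, ?_⟩
  simp only [hv, Fintype.prod_prod_type, UnitsInt.univ, prod_pair (show (1 : ℤˣ) ≠ -1 by decide)]
  push_cast
  rw [← h.sq_left, ← h.sq_right]
  ring

theorem one_le_abs_prod_conjugates (h : IsBiquadratic k n κ Δ) {v : ℤˣ × ℤˣ → ℝ}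
    (hv : v ∈ h.conjugates) (hint : IsIntegral ℤ v) (hne : v 1 ≠ 0) : 1 ≤ |∏ ε, v ε| := by
  obtain ⟨q, hq⟩ := h.prod_conjugates_rational hv
  have hqint : IsIntegral ℤ (q : ℝ) :=
    hq ▸ IsIntegral.prod v fun ε _ => hint.map (Pi.evalAlgHom ℤ (fun _ => ℝ) ε)
  obtain ⟨N, rfl⟩ := IsIntegrallyClosed.isIntegral_iff.mp
    ((isIntegral_algebraMap_iff (algebraMap ℚ ℝ).injective).mp hqint)
  have hN : N ≠ 0 := by
    rintro rfl
    exact prod_ne_zero_iff.mpr (fun ε _ => h.conjugate_ne_zero hv hne ε) (by simpa using hq)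
  rw [hq, eq_intCast]
  exact_mod_cast Int.one_le_abs hN

end IsBiquadratic

end Biquadratic

section Approximation

lemma pow_three_mul_pow_ten_mul_pow_seven (x y w : ℝ) (n ρ : ℕ) :
    x ^ (3 * n) * y ^ (7 * n + ρ + 3 * n) * w ^ (7 * n + ρ) =
      (x ^ 3 * y ^ 10 * w ^ 7) ^ n * (y * w) ^ ρ := by
  rw [show 7 * n + ρ + 3 * n = 10 * n + ρ by ring, pow_add, pow_add]
  simp only [mul_pow, ← pow_mul]
  ring

lemma pow_mul_pow_le {x y : ℝ} (hx : 0 ≤ x) (hx' : x ≤ 1 / 2) (hy : 0 ≤ y) (hy' : y ≤ 1000)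
    (n : ℕ) {ρ : ℕ} (hρ : ρ ≤ 6) : x ^ n * y ^ ρ ≤ (1 / 2) ^ n * 1000 ^ 6 := by
  have : y ^ ρ ≤ 1000 ^ 6 :=
    (pow_le_pow_left₀ hy hy' _).trans (pow_le_pow_right₀ (by norm_num) hρ)
  gcongr

lemma half_pow_mul_pow_lt_one {Z : ℝ} {n p : ℕ} (hn : Z ^ p < 2 ^ n) : (1 / 2) ^ n * Z ^ p < 1 := by
  rw [one_div, inv_pow, inv_mul_lt_one₀ (by positivity)]
  exact hn

lemma prod_upper_bounds_eq {z : ℝ} (hz : z ≠ 0) (k Z : ℝ) (j m : ℕ) :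
    Z * ((z ^ 2 / 2) ^ j * (5 / 2) ^ (m + j) + 4 ^ j * 1.01 ^ (m + j) * (1.01 * k * z) ^ m) *
      (2 * Z * (16 / 3) ^ j * (5 / 4) ^ (m + j)) *
      (2 * (Z * (1.01 * k) ^ m) * (16 / (3 * z)) ^ j * (5 / 4) ^ (m + j)) *
      (2 * Z * 4 ^ j * (1.01 * (k + 1 / 2)) ^ (m + j)) =
    8 * Z ^ 4 * ((512 / 9 * z) ^ j * (125 / 32 * 1.01 * (k + 1 / 2)) ^ (m + j) * (1.01 * k) ^ m +
      (4096 / 9 / z) ^ j * (25 / 16 * 1.01 ^ 2 * (k + 1 / 2)) ^ (m + j) *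
        (1.01 ^ 2 * k ^ 2 * z) ^ m) := by
  have hmain : 512 / 9 * z = z ^ 2 / 2 * (16 / 3) * (16 / (3 * z)) * 4 := by
    field_simp
    norm_num
  have herr : 4096 / 9 / z = 4 * (16 / 3) * (16 / (3 * z)) * 4 := by
    field_simp
    norm_num
  rw [hmain, herr, show 125 / 32 * 1.01 * (k + 1 / 2) = 5 / 2 * (5 / 4) * (5 / 4) *
      (1.01 * (k + 1 / 2)) by ring, show 25 / 16 * 1.01 ^ 2 * (k + 1 / 2) = 1.01 * (5 / 4) *
      (5 / 4) * (1.01 * (k + 1 / 2)) by ring,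
    show 1.01 ^ 2 * k ^ 2 * z = 1.01 * k * z * (1.01 * k) by ring]
  simp only [mul_pow (_ * _ * _ : ℝ) (1.01 * (k + 1 / 2)), mul_pow (_ * _ * _ : ℝ) (4 : ℝ),
    mul_pow (_ * _ : ℝ) (16 / (3 * z)), mul_pow (_ * _ : ℝ) (5 / 4 : ℝ), mul_pow (_ : ℝ) (16 / 3),
    mul_pow (_ : ℝ) (5 / 4 : ℝ), mul_pow (_ * _ * _ : ℝ) (1.01 * k)]
  ring

/-- The real quantities behind the approximation: `g` is close to `1`, `h` is close to `0`, and
`z` measures both distances. -/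
structure ApproxPair (k z g h : ℝ) : Prop where
  seven_le : 7 ≤ k
  le_thirteen : k ≤ 13
  pos : 0 < z
  mul_le : k * z ≤ 6.5 / 10 ^ 10
  right_pos : 0 < h
  right_lt_left : h < g
  left_mul_right : g * h = k * z
  one_sub_mul_one_sub : (1 - g) * (1 - h) = z

namespace ApproxPair

variable {k z g h : ℝ}

lemma left_add_right (H : ApproxPair k z g h) : g + h = 1 + (k - 1) * z := by
  linear_combination H.left_mul_right - H.one_sub_mul_one_sub

lemma left_pos (H : ApproxPair k z g h) : 0 < g := H.right_pos.trans H.right_lt_left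

lemma left_lt_one (H : ApproxPair k z g h) : g < 1 := by
  by_contra! hg
  have hh : 1 < h := by nlinarith [H.one_sub_mul_one_sub, H.pos]
  nlinarith [H.left_mul_right, H.mul_le]

lemma right_lt_one (H : ApproxPair k z g h) : h < 1 := H.right_lt_left.trans H.left_lt_one

lemma le_one_sub_left (H : ApproxPair k z g h) : z ≤ 1 - g := by
  nlinarith [H.one_sub_mul_one_sub, H.left_lt_one, H.right_pos]

lemma right_le_one_div (H : ApproxPair k z g h) : h ≤ 2 / 10 ^ 9 := by
  have hg : 1 / 2 < g := by nlinarith [H.left_add_right, H.right_lt_left, H.seven_le, H.pos]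
  nlinarith [H.left_mul_right, H.mul_le, H.right_pos]

lemma one_sub_left_le (H : ApproxPair k z g h) : 1 - g ≤ 1.01 * z := by
  nlinarith [H.one_sub_mul_one_sub, H.left_lt_one, H.right_le_one_div]

lemma z_le (H : ApproxPair k z g h) : z ≤ 1 / 10 ^ 10 := by
  nlinarith [H.mul_le, H.seven_le, H.pos]

lemma one_le_left (H : ApproxPair k z g h) : 1 ≤ 1.01 * g := by
  linarith [H.one_sub_left_le, H.z_le]

lemma right_le (H : ApproxPair k z g h) : h ≤ 1.01 * k * z := by
  nlinarith [H.left_mul_right, H.one_le_left, H.right_pos]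

lemma right_div_le (H : ApproxPair k z g h) : h / z ≤ 1.01 * k :=
  (div_le_iff₀ H.pos).mpr H.right_le

lemma abs_padePoly_left_one_le (H : ApproxPair k z g h) {j M : ℕ} (hjM : j ≤ M) :
    |padePoly j M g 1| ≤ 4 ^ j * 1.01 ^ M := by
  have hz := H.pos
  have hdist : |1 - g| ≤ 1.01 * z * 1 := by
    rw [abs_of_pos (sub_pos.mpr H.left_lt_one), mul_one]
    exact H.one_sub_left_le
  have hle := abs_padePoly_le hjM zero_le_one (by positivity)
    ((abs_of_pos H.left_pos).trans_le H.left_lt_one.le) hdist one_half_pos one_half_lt_one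
  refine hle.trans ?_
  gcongr
  · norm_num
  · linarith [H.z_le]

lemma padeRemainder_one_left_le (H : ApproxPair k z g h) {j : ℕ} (hj : 0 < j) (M : ℕ) :
    padeRemainder j M 1 g ≤ (z ^ 2 / 2) ^ j * (5 / 2) ^ M := by
  have hz := H.pos
  have hg := H.left_pos
  have h1g := sub_nonneg.mpr H.left_lt_one.le
  have hratio : (1 - g) / (3 / 2 * g) ≤ 0.681 * z := by
    rw [div_le_iff₀ (by positivity)]
    nlinarith [H.one_sub_left_le, H.one_le_left]
  have hgap : 1 - g ≤ 1 / 100 * (3 / 2 * g) := by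
    linarith [H.one_sub_left_le, H.one_le_left, H.z_le]
  calc padeRemainder j M 1 g
      ≤ (1 - 1 / 100)⁻¹ ^ j * ((1 - g) / (3 / 2 * g)) ^ (2 * j + 1) * ((1 + 3 / 2) * g) ^ M :=
        padeRemainder_le hj M hg (by norm_num) (by norm_num) (by norm_num) H.left_lt_one.le hgap
    _ ≤ (1 - 1 / 100)⁻¹ ^ j * (0.681 * z) ^ (2 * j) * ((1 + 3 / 2) * 1) ^ M := by
        gcongr
        · refine (pow_le_pow_left₀ (by positivity) hratio _).trans ?_
          exact pow_le_pow_of_le_one (by positivity) (by linarith [H.z_le]) (by omega)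
        · exact H.left_lt_one.le
    _ = ((1 - 1 / 100)⁻¹ * 0.681 ^ 2 * z ^ 2) ^ j * (5 / 2) ^ M := by
        rw [pow_mul, ← mul_pow]
        ring
    _ ≤ (z ^ 2 / 2) ^ j * (5 / 2) ^ M := by
        gcongr
        nlinarith [sq_nonneg z]

lemma le_padeRemainder_one_left (H : ApproxPair k z g h) {j M : ℕ} (hjM : 2 * j + 1 ≤ M) :
    z ^ (2 * j + 1) ≤ 1.01 ^ M * padeRemainder j M 1 g := by
  have hz := H.pos
  have hg := H.left_pos
  have h1g := sub_pos.mpr H.left_lt_one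
  calc z ^ (2 * j + 1)
      ≤ z ^ (2 * j + 1) * (1.01 * g) ^ M :=
        le_mul_of_one_le_right (by positivity) (one_le_pow₀ H.one_le_left)
    _ = 1.01 ^ M * (z ^ (2 * j + 1) * g ^ M) := by rw [mul_pow]; ring
    _ ≤ 1.01 ^ M * ((1 - g) ^ (2 * j + 1) * g ^ (M - (2 * j + 1))) := by
        gcongr 1.01 ^ M * (?_ ^ (2 * j + 1) * ?_)
        · exact H.le_one_sub_left
        · exact pow_le_pow_of_le_one hg.le H.left_lt_one.le (Nat.sub_le _ _)
    _ ≤ 1.01 ^ M * padeRemainder j M 1 g := by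
        gcongr
        exact le_padeRemainder hjM hg.le H.left_lt_one.le

end ApproxPair

/-- The exponential relation `α + α' = B * g ^ m + B' * h ^ m`, in which `α` and `B` carry the main
terms, with all coefficients controlled by `Z`. -/
structure ApproxRelation (Z g h B B' α α' : ℝ) (m : ℕ) : Prop where
  left_le : B ≤ Z
  one_le_left_mul : 1 ≤ B * Z
  right_nonneg : 0 ≤ B'
  right_le : B' ≤ Z
  nonneg : 0 ≤ α
  le : α ≤ Z
  nonneg' : 0 ≤ α'
  le' : α' ≤ Z * h ^ m
  add_eq : α + α' = B * g ^ m + B' * h ^ m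

lemma ApproxRelation.left_pos {Z g h B B' α α' : ℝ} {m : ℕ}
    (W : ApproxRelation Z g h B B' α α' m) : 0 < B :=
  pos_of_mul_pos_left (one_pos.trans_le W.one_le_left_mul) (W.nonneg.trans W.le)

namespace ApproxPair

variable {k z g h Z B B' α α' : ℝ} {j m : ℕ}

lemma abs_sub_le_of_approxRelation (H : ApproxPair k z g h)
    (W : ApproxRelation Z g h B B' α α' m) : |g ^ m * B - α| ≤ Z * (1.01 * k * z) ^ m := by
  have hh := H.right_pos
  have hB'h : B' * h ^ m ≤ Z * h ^ m := by gcongr; exact W.right_le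
  have hB'h0 : 0 ≤ B' * h ^ m := mul_nonneg W.right_nonneg (by positivity)
  have hle : |g ^ m * B - α| ≤ Z * h ^ m :=
    abs_le.mpr ⟨by linarith [W.add_eq, W.le', W.nonneg'], by linarith [W.add_eq, W.le', W.nonneg']⟩
  have hZ : 0 ≤ Z := W.nonneg.trans W.le
  refine hle.trans ?_
  gcongr
  exact H.right_le

lemma abs_auxNumber_one_left_le (H : ApproxPair k z g h)
    (W : ApproxRelation Z g h B B' α α' m) (hj : 0 < j) :
    |auxNumber j m 1 g B α| ≤
      Z * ((z ^ 2 / 2) ^ j * (5 / 2) ^ (m + j) + 4 ^ j * 1.01 ^ (m + j) * (1.01 * k * z) ^ m) := by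
  have hB := W.left_pos
  have hR0 : 0 ≤ padeRemainder j (m + j) 1 g := by
    have := sub_nonneg.mpr H.left_lt_one.le
    have := H.left_pos
    exact sum_nonneg fun n _ => by positivity
  calc |auxNumber j m 1 g B α|
      ≤ padeRemainder j (m + j) 1 g * B + |padePoly j (m + j) g 1| * |g ^ m * B - α| := by
        rw [auxNumber_eq_padeRemainder hj]
        refine (abs_add_le _ _).trans_eq ?_
        rw [abs_mul, abs_mul, abs_mul, abs_pow, abs_neg, abs_one, one_pow, one_mul,
          abs_of_nonneg hR0, abs_of_pos hB]
    _ ≤ (z ^ 2 / 2) ^ j * (5 / 2) ^ (m + j) * Z +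
          4 ^ j * 1.01 ^ (m + j) * (Z * (1.01 * k * z) ^ m) := by
        gcongr
        · exact H.padeRemainder_one_left_le hj _
        · exact W.left_le
        · exact H.abs_padePoly_left_one_le (Nat.le_add_left j m)
        · exact H.abs_sub_le_of_approxRelation W
    _ = _ := by ring

lemma auxNumber_one_left_ne_zero (H : ApproxPair k z g h)
    (W : ApproxRelation Z g h B B' α α' m) (hj : 0 < j) (hjm : j + 1 ≤ m) (hZ : 0 < Z)
    (hlt : Z ^ 2 * (4 ^ j * 1.01 ^ (m + j) * (1.01 * k * z) ^ m) * 1.01 ^ (m + j) <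
      z ^ (2 * j + 1)) : auxNumber j m 1 g B α ≠ 0 := by
  have hB := W.left_pos
  rw [auxNumber_eq_padeRemainder hj]
  intro hzero
  have hR : padeRemainder j (m + j) 1 g * B ≤ 4 ^ j * 1.01 ^ (m + j) * (Z * (1.01 * k * z) ^ m) :=
    calc padeRemainder j (m + j) 1 g * B
        ≤ |padeRemainder j (m + j) 1 g * B| := le_abs_self _
      _ = |padePoly j (m + j) g 1| * |g ^ m * B - α| := by
          rw [← abs_mul, ← abs_neg (padePoly j (m + j) g 1 * _), ← eq_neg_of_add_eq_zero_left hzero,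
            mul_assoc, abs_mul ((-1) ^ j), abs_pow, abs_neg, abs_one, one_pow, one_mul]
      _ ≤ _ := by
          gcongr
          · exact H.abs_padePoly_left_one_le (Nat.le_add_left j m)
          · exact H.abs_sub_le_of_approxRelation W
  have hRle := H.le_padeRemainder_one_left (show 2 * j + 1 ≤ m + j by omega)
  refine hlt.not_ge ?_
  calc z ^ (2 * j + 1)
      ≤ z ^ (2 * j + 1) * (B * Z) :=
        le_mul_of_one_le_right (pow_nonneg H.pos.le _) W.one_le_left_mul
    _ ≤ 1.01 ^ (m + j) * padeRemainder j (m + j) 1 g * (B * Z) := by gcongr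
    _ = 1.01 ^ (m + j) * (padeRemainder j (m + j) 1 g * B) * Z := by ring
    _ ≤ 1.01 ^ (m + j) * (4 ^ j * 1.01 ^ (m + j) * (Z * (1.01 * k * z) ^ m)) * Z := by gcongr
    _ = _ := by ring

lemma abs_auxNumber_one_right_le (H : ApproxPair k z g h)
    (W : ApproxRelation Z g h B B' α α' m) (j : ℕ) :
    |auxNumber j m 1 h B' α| ≤ 2 * Z * (16 / 3) ^ j * (5 / 4) ^ (m + j) := by
  have hh := H.right_pos
  have hle : |auxNumber j m 1 h B' α| ≤
      2 * Z * (1 / (1 / 4 * (1 - 1 / 4))) ^ j * (1 + 1 * (1 / 4)) ^ (m + j) := by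
    refine abs_auxNumber_le zero_le_one abs_one.le ?_ ?_ ?_ ?_ (by norm_num) (by norm_num)
    · exact (abs_of_pos hh).trans_le H.right_lt_one.le
    · rw [abs_of_pos (sub_pos.mpr H.right_lt_one)]
      linarith
    · rw [one_pow, one_mul, abs_of_nonneg W.right_nonneg]
      exact W.right_le
    · exact (abs_of_nonneg W.nonneg).trans_le W.le
  norm_num at hle ⊢
  exact hle

lemma abs_div_pow_le (H : ApproxPair k z g h) (W : ApproxRelation Z g h B B' α α' m) :
    |α' / z ^ m| ≤ Z * (1.01 * k) ^ m := by
  have hz := H.pos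
  have hh := H.right_pos
  have hZ : 0 ≤ Z := W.nonneg.trans W.le
  rw [abs_of_nonneg (div_nonneg W.nonneg' (by positivity))]
  calc α' / z ^ m ≤ Z * h ^ m / z ^ m := by gcongr; exact W.le'
    _ = Z * (h / z) ^ m := by rw [div_pow, mul_div_assoc]
    _ ≤ Z * (1.01 * k) ^ m := by gcongr; exact H.right_div_le

lemma abs_sub_one_pow_mul_le (H : ApproxPair k z g h) (m : ℕ) (hB : 0 ≤ B) (hBZ : B ≤ Z) :
    |(k - 1) ^ m * B| ≤ Z * (1.01 * k) ^ m := by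
  have hk := H.seven_le
  have hk1 : 0 ≤ k - 1 := by linarith
  rw [abs_of_nonneg (by positivity), mul_comm Z]
  gcongr
  linarith

lemma abs_auxNumber_left_div_le (H : ApproxPair k z g h)
    (W : ApproxRelation Z g h B B' α α' m) (j : ℕ) :
    |auxNumber j m (k - 1) (g / z) B (α' / z ^ m)| ≤
      2 * (Z * (1.01 * k) ^ m) * (16 / (3 * z)) ^ j * (5 / 4) ^ (m + j) := by
  have hz := H.pos
  have hk : 0 ≤ k - 1 := by linarith [H.seven_le]
  have hkz : k - 1 ≤ 1 / z := by
    rw [le_div_iff₀ hz]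
    linarith [H.mul_le]
  have hg0 : 0 ≤ g / z := div_nonneg H.left_pos.le hz.le
  have hgz : g / z ≤ 1 / z := by gcongr; exact H.left_lt_one.le
  have hle : |auxNumber j m (k - 1) (g / z) B (α' / z ^ m)| ≤ 2 * (Z * (1.01 * k) ^ m) *
      (1 / z / (1 / 4 * (1 - 1 / 4))) ^ j * (1 + 1 * (1 / 4)) ^ (m + j) := by
    refine abs_auxNumber_le zero_le_one ?_ ?_ ?_
      (H.abs_sub_one_pow_mul_le m W.left_pos.le W.left_le)
      (H.abs_div_pow_le W) (by norm_num) (by norm_num)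
    · rwa [abs_of_nonneg hk]
    · rwa [abs_of_nonneg hg0]
    · exact abs_le.mpr ⟨by linarith, by linarith⟩
  convert hle using 3
  · congr 1
    field_simp
    norm_num
  · norm_num

lemma abs_auxNumber_right_div_le (H : ApproxPair k z g h)
    (W : ApproxRelation Z g h B B' α α' m) (j : ℕ) :
    |auxNumber j m (k - 1) (h / z) B' (α' / z ^ m)| ≤
      2 * Z * 4 ^ j * (1.01 * (k + 1 / 2)) ^ (m + j) := by
  have hz := H.pos
  have hk := H.seven_le
  have : 0 < k := by linarith
  have hdiff : k - 1 - h / z = -((1 - g) / z) := by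
    field_simp
    linear_combination -H.left_add_right
  have hdist : |k - 1 - h / z| ≤ 1 / k * (1.01 * k) := by
    have hnonneg : 0 ≤ (1 - g) / z := div_nonneg (sub_nonneg.mpr H.left_lt_one.le) hz.le
    rw [hdiff, abs_neg, abs_of_nonneg hnonneg, div_le_iff₀ hz]
    field_simp
    exact H.one_sub_left_le
  have hle : |auxNumber j m (k - 1) (h / z) B' (α' / z ^ m)| ≤ 2 * (Z * (1.01 * k) ^ m) *
      (1.01 * k / (1 / 2 * (1 - 1 / 2))) ^ j * (1 + 1 / k * (1 / 2)) ^ (m + j) := by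
    refine abs_auxNumber_le (by positivity) ?_ ?_ hdist
      (H.abs_sub_one_pow_mul_le m W.right_nonneg W.right_le)
      (H.abs_div_pow_le W) (by norm_num) (by norm_num)
    · exact abs_le.mpr ⟨by linarith, by linarith⟩
    · rw [abs_of_pos (div_pos H.right_pos hz)]
      exact H.right_div_le
  refine hle.trans_eq ?_
  have hsplit : 1.01 * (k + 1 / 2) = 1.01 * k * (1 + 1 / k * (1 / 2)) := by field_simp
  rw [hsplit, mul_pow _ (1 + _), pow_add (1.01 * k), show 1.01 * k / (1 / 2 * (1 - 1 / 2)) =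
    4 * (1.01 * k) by ring, mul_pow 4 (1.01 * k)]
  ring

lemma nonvanishing_margin (H : ApproxPair k z g h) {n ρ : ℕ} (hZ : 10000 ≤ Z)
    (hn : Z ^ 9 < 2 ^ n) (hzZ : 1 ≤ z * Z) :
    Z ^ 2 * (4 ^ (3 * n) * 1.01 ^ (7 * n + ρ + 3 * n) * (1.01 * k * z) ^ (7 * n + ρ)) *
      1.01 ^ (7 * n + ρ + 3 * n) < z ^ (2 * (3 * n) + 1) := by
  have hz := H.pos
  have hk : 0 < k := by linarith [H.seven_le]
  have hfactor : 4 ^ 3 * (1.01 * 1.01) ^ 10 * (1.01 * k * z) ^ 7 ≤ 1 / 2 * z ^ 6 :=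
    calc 4 ^ 3 * (1.01 * 1.01) ^ 10 * (1.01 * k * z) ^ 7
        = 4 ^ 3 * 1.01 ^ 27 * k ^ 6 * (k * z) * z ^ 6 := by ring
      _ ≤ 4 ^ 3 * 1.01 ^ 27 * 13 ^ 6 * (6.5 / 10 ^ 10) * z ^ 6 := by
          gcongr
          exacts [H.le_thirteen, H.mul_le]
      _ ≤ 1 / 2 * z ^ 6 := by gcongr; norm_num
  have hsmall : 1.01 * 1.01 * (1.01 * k * z) ≤ 1 := by linarith [H.mul_le]
  have : 0 < Z := by linarith
  calc Z ^ 2 * (4 ^ (3 * n) * 1.01 ^ (7 * n + ρ + 3 * n) * (1.01 * k * z) ^ (7 * n + ρ)) *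
        1.01 ^ (7 * n + ρ + 3 * n)
      = Z ^ 2 * (4 ^ (3 * n) * (1.01 * 1.01) ^ (7 * n + ρ + 3 * n) *
          (1.01 * k * z) ^ (7 * n + ρ)) := by rw [mul_pow 1.01 1.01]; ring
    _ ≤ Z ^ 2 * ((1 / 2 * z ^ 6) ^ n * 1 ^ ρ) := by
        rw [pow_three_mul_pow_ten_mul_pow_seven]
        gcongr
    _ ≤ Z ^ 2 * ((1 / 2 * z ^ 6) ^ n * 1 ^ ρ) * (z * Z) :=
        le_mul_of_one_le_right (by positivity) hzZ
    _ = (1 / 2) ^ n * Z ^ 3 * z ^ (2 * (3 * n) + 1) := by rw [mul_pow, one_pow]; ring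
    _ ≤ (1 / 2) ^ n * Z ^ 9 * z ^ (2 * (3 * n) + 1) := by
        gcongr
        · linarith
        · norm_num
    _ < 1 * z ^ (2 * (3 * n) + 1) := by
        gcongr
        exact half_pow_mul_pow_lt_one hn
    _ = z ^ (2 * (3 * n) + 1) := one_mul _

lemma remainder_factor_le (H : ApproxPair k z g h) (n : ℕ) {ρ : ℕ} (hρ : ρ ≤ 6) :
    (512 / 9 * z) ^ (3 * n) * (125 / 32 * 1.01 * (k + 1 / 2)) ^ (7 * n + ρ + 3 * n) *
      (1.01 * k) ^ (7 * n + ρ) ≤ (1 / 2) ^ n * 1000 ^ 6 := by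
  have hz := H.pos
  have hk : 0 < k := by linarith [H.seven_le]
  have hk13 := H.le_thirteen
  rw [pow_three_mul_pow_ten_mul_pow_seven]
  refine pow_mul_pow_le (by positivity) ?_ (by positivity) ?_ n hρ
  · calc (512 / 9 * z) ^ 3 * (125 / 32 * 1.01 * (k + 1 / 2)) ^ 10 * (1.01 * k) ^ 7
        = (512 / 9) ^ 3 * (125 / 32) ^ 10 * 1.01 ^ 17 * (k * z) ^ 3 * (k + 1 / 2) ^ 10 * k ^ 4 := by
          ring
      _ ≤ (512 / 9) ^ 3 * (125 / 32) ^ 10 * 1.01 ^ 17 * (6.5 / 10 ^ 10) ^ 3 *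
          (13 + 1 / 2) ^ 10 * 13 ^ 4 := by
          gcongr
          exact H.mul_le
      _ ≤ 1 / 2 := by norm_num
  · calc 125 / 32 * 1.01 * (k + 1 / 2) * (1.01 * k)
        ≤ 125 / 32 * 1.01 * (13 + 1 / 2) * (1.01 * 13) := by gcongr
      _ ≤ 1000 := by norm_num

lemma error_factor_le (H : ApproxPair k z g h) (n : ℕ) {ρ : ℕ} (hρ : ρ ≤ 6) :
    (4096 / 9 / z) ^ (3 * n) * (25 / 16 * 1.01 ^ 2 * (k + 1 / 2)) ^ (7 * n + ρ + 3 * n) *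
      (1.01 ^ 2 * k ^ 2 * z) ^ (7 * n + ρ) ≤ (1 / 2) ^ n * 1000 ^ 6 := by
  have hz := H.pos
  have hk : 0 < k := by linarith [H.seven_le]
  have hk13 := H.le_thirteen
  rw [pow_three_mul_pow_ten_mul_pow_seven]
  refine pow_mul_pow_le (by positivity) ?_ (by positivity) ?_ n hρ
  · calc (4096 / 9 / z) ^ 3 * (25 / 16 * 1.01 ^ 2 * (k + 1 / 2)) ^ 10 *
          (1.01 ^ 2 * k ^ 2 * z) ^ 7
        = (4096 / 9) ^ 3 * (25 / 16) ^ 10 * 1.01 ^ 34 * (k * z) ^ 4 * (k + 1 / 2) ^ 10 *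
            k ^ 10 := by
          field_simp
      _ ≤ (4096 / 9) ^ 3 * (25 / 16) ^ 10 * 1.01 ^ 34 * (6.5 / 10 ^ 10) ^ 4 *
          (13 + 1 / 2) ^ 10 * 13 ^ 10 := by
          gcongr
          exact H.mul_le
      _ ≤ 1 / 2 := by norm_num
  · calc 25 / 16 * 1.01 ^ 2 * (k + 1 / 2) * (1.01 ^ 2 * k ^ 2 * z)
        = 25 / 16 * 1.01 ^ 4 * (k + 1 / 2) * k * (k * z) := by ring
      _ ≤ 25 / 16 * 1.01 ^ 4 * (13 + 1 / 2) * 13 * (6.5 / 10 ^ 10) := by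
          gcongr
          exact H.mul_le
      _ ≤ 1000 := by norm_num

theorem abs_auxNumber_mul_lt_one (H : ApproxPair k z g h) {n ρ : ℕ}
    (W : ApproxRelation Z g h B B' α α' (7 * n + ρ)) (hn0 : 0 < n) (hρ : ρ ≤ 6) (hZ : 10000 ≤ Z)
    (hn : Z ^ 9 < 2 ^ n) :
    |auxNumber (3 * n) (7 * n + ρ) 1 g B α| * |auxNumber (3 * n) (7 * n + ρ) 1 h B' α| *
      |auxNumber (3 * n) (7 * n + ρ) (k - 1) (g / z) B (α' / z ^ (7 * n + ρ))| *
      |auxNumber (3 * n) (7 * n + ρ) (k - 1) (h / z) B' (α' / z ^ (7 * n + ρ))| < 1 := by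
  have hz := H.pos
  have hk : 0 < k := by linarith [H.seven_le]
  have : 0 < Z := by linarith
  refine (mul_le_mul (mul_le_mul (mul_le_mul (H.abs_auxNumber_one_left_le W (by omega))
    (H.abs_auxNumber_one_right_le W _) (abs_nonneg _) (by positivity))
    (H.abs_auxNumber_left_div_le W _) (abs_nonneg _) (by positivity))
    (H.abs_auxNumber_right_div_le W _) (abs_nonneg _) (by positivity)).trans_lt ?_
  rw [prod_upper_bounds_eq hz.ne']
  calc _ ≤ 8 * Z ^ 4 * ((1 / 2) ^ n * 1000 ^ 6 + (1 / 2) ^ n * 1000 ^ 6) := by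
        gcongr 8 * Z ^ 4 * (?_ + ?_)
        exacts [H.remainder_factor_le n hρ, H.error_factor_le n hρ]
    _ = (1 / 2) ^ n * Z ^ 4 * (16 * 1000 ^ 6) := by ring
    _ ≤ (1 / 2) ^ n * Z ^ 4 * Z ^ 5 := by
        gcongr
        exact le_trans (by norm_num) (pow_le_pow_left₀ (by norm_num) hZ 5)
    _ = (1 / 2) ^ n * Z ^ 9 := by ring
    _ < 1 := half_pow_mul_pow_lt_one hn

end ApproxPair

end Approximation

section IntegralConjugates

lemma isIntegral_of_sq_sub_mul_add_one {R : Type*} [CommRing R] {x : R} (r : ℤ)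
    (hx : x ^ 2 - r * x + 1 = 0) : IsIntegral ℤ x := by
  refine ⟨Polynomial.X ^ 2 - Polynomial.C r * Polynomial.X + Polynomial.C 1, by monicity!, ?_⟩
  rw [← Polynomial.aeval_def]
  simpa using hx

namespace IsBiquadratic

variable {k n : ℤ} {κ Δ : ℝ}

/-- The ring of vectors of conjugates of the algebraic integers in `ℚ(κ, Δ)`. -/
def integralConjugates (h : IsBiquadratic k n κ Δ) : Subring (ℤˣ × ℤˣ → ℝ) :=
  h.conjugates ⊓ (integralClosure ℤ (ℤˣ × ℤˣ → ℝ)).toSubring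

lemma left_mem (h : IsBiquadratic k n κ Δ) :
    (fun ε : ℤˣ × ℤˣ => ε.1 * κ) ∈ h.integralConjugates := by
  refine ⟨⟨0, 1, 0, 0, fun ε => by simp⟩, IsIntegral.of_pow two_pos ?_⟩
  convert isIntegral_algebraMap (R := ℤ) (A := ℤˣ × ℤˣ → ℝ) (x := k) using 1
  funext ε
  simpa using (h.units_mul ε.1 ε.2).sq_left

lemma right_mem (h : IsBiquadratic k n κ Δ) :
    (fun ε : ℤˣ × ℤˣ => ε.2 * Δ) ∈ h.integralConjugates := by
  refine ⟨⟨0, 0, 1, 0, fun ε => by simp⟩, IsIntegral.of_pow two_pos ?_⟩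
  convert isIntegral_algebraMap (R := ℤ) (A := ℤˣ × ℤˣ → ℝ) (x := n) using 1
  funext ε
  simpa using (h.units_mul ε.1 ε.2).sq_right

lemma half_add_mul_left_mem (h : IsBiquadratic k n κ Δ) {a r : ℤ} (hr : k * a ^ 2 + 4 = r ^ 2) :
    (fun ε : ℤˣ × ℤˣ => (r + a * (ε.1 * κ)) / 2) ∈ h.integralConjugates := by
  refine ⟨⟨r / 2, a / 2, 0, 0, fun ε => ?_⟩, isIntegral_of_sq_sub_mul_add_one r ?_⟩
  · push_cast
    ring
  · have hr' : (k : ℝ) * a ^ 2 + 4 = r ^ 2 := by exact_mod_cast hr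
    funext ε
    simp only [Pi.add_apply, Pi.sub_apply, Pi.pow_apply, Pi.mul_apply, Pi.intCast_apply,
      Pi.one_apply, Pi.zero_apply]
    linear_combination (a : ℝ) ^ 2 / 4 * (h.units_mul ε.1 ε.2).sq_left + hr' / 4

lemma half_add_right_mem (h : IsBiquadratic k n κ Δ) {s : ℤ} (hs : n + 4 = s ^ 2) :
    (fun ε : ℤˣ × ℤˣ => (s + ε.2 * Δ) / 2) ∈ h.integralConjugates := by
  refine ⟨⟨s / 2, 0, 1 / 2, 0, fun ε => ?_⟩, isIntegral_of_sq_sub_mul_add_one s ?_⟩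
  · push_cast
    ring
  · have hs' : (n : ℝ) + 4 = s ^ 2 := by exact_mod_cast hs
    funext ε
    simp only [Pi.add_apply, Pi.sub_apply, Pi.pow_apply, Pi.mul_apply, Pi.intCast_apply,
      Pi.one_apply, Pi.zero_apply]
    linear_combination (h.units_mul ε.1 ε.2).sq_right / 4 + hs' / 4

end IsBiquadratic

end IntegralConjugates

/-- The arithmetic data of the theorem. The cases `c₁⁺`, `c₂⁺`, `c₂⁻` of `c` enter only through
`s_eq`, as `(e, σ) = (1, 1), (2, 1), (2, -1)`, and the sign `η` stands for `y₂ / 2`. -/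
structure PellSystem where
  (k a c r s σ η x₀ z₀ : ℤ)
  e : ℕ
  seven_le_k : 7 ≤ k
  k_le_thirteen : k ≤ 13
  le_a : 10864 ≤ a
  mul_lt_c : k * a < c
  r_pos : 0 < r
  r_sq : k * a ^ 2 + 4 = r ^ 2
  s_pos : 0 < s
  s_sq : a * c + 4 = s ^ 2
  not_isSquare_mul : ¬IsSquare (k * (a * c))
  σ_sq : σ ^ 2 = 1
  s_eq : e = 1 ∧ σ = 1 ∧ s = r + a ∨ e = 2 ∧ s = r ^ 2 + σ * (r * a) - 2
  η_sq : η ^ 2 = 1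
  x₀_pos : 0 < x₀
  x₀_le_c : x₀ ≤ c
  pell : a * z₀ ^ 2 - c * x₀ ^ 2 = 4 * (a - c)

lemma not_isSquare_of_add_four_eq_sq {N s : ℤ} (hN : 4 ≤ N) (hs : N + 4 = s ^ 2) :
    ¬IsSquare N := by
  rintro ⟨w, hw⟩
  rw [← abs_mul_abs_self] at hw
  rw [← sq_abs] at hs
  have hw0 := abs_nonneg w
  have hs0 := abs_nonneg s
  have hw2 : 2 ≤ |w| := by nlinarith
  have hlt : |w| < |s| := by nlinarith
  have hgt : |s| < |w| + 1 := by nlinarith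
  lia

lemma cast_mem_Icc_of_sq_eq_one {σ : ℤ} (hσ : σ ^ 2 = 1) : (σ : ℝ) ∈ Set.Icc (-1) 1 := by
  rcases sq_eq_one_iff.mp hσ with rfl | rfl <;> norm_num

lemma mul_eq_of_recurrence {R : Type*} [CommRing R] {f : ℕ → R} {C r A A' τ τ' : R}
    (hf : ∀ i, f (i + 2) = r * f (i + 1) - f i) (hadd : τ + τ' = r) (hmul : τ * τ' = 1)
    (h0 : C * f 0 = A + A') (h1 : C * f 1 = A * τ + A' * τ') (i : ℕ) :
    C * f i = A * τ ^ i + A' * τ' ^ i := by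
  induction i using Nat.twoStepInduction with
  | zero => simpa using h0
  | one => simpa using h1
  | more i ih ih1 =>
    have hτ : τ ^ (i + 2) = r * τ ^ (i + 1) - τ ^ i := by
      linear_combination τ ^ (i + 1) * hadd - τ ^ i * hmul
    have hτ' : τ' ^ (i + 2) = r * τ' ^ (i + 1) - τ' ^ i := by
      linear_combination τ' ^ (i + 1) * hadd - τ' ^ i * hmul
    rw [hf, hτ, hτ']
    linear_combination r * ih1 - ih

namespace PellSystem

variable (p : PellSystem)

/-- The square root of `k`. -/
noncomputable def κ : ℝ := √p.k

/-- The square root of `a * c`. -/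
noncomputable def Δ : ℝ := √(p.a * p.c)

/-- The small root of `X ^ 2 - r * X + 1`. -/
noncomputable def τ : ℝ := (p.r - p.a * p.κ) / 2

/-- The large root of `X ^ 2 - r * X + 1`. -/
noncomputable def τ' : ℝ := (p.r + p.a * p.κ) / 2

/-- The large root of `X ^ 2 - s * X + 1`. -/
noncomputable def β : ℝ := (p.s + p.Δ) / 2

/-- The small root of `X ^ 2 - s * X + 1`. -/
noncomputable def β' : ℝ := (p.s - p.Δ) / 2

lemma seven_le : (7 : ℝ) ≤ p.k := by exact_mod_cast p.seven_le_k

lemma le_thirteen : (p.k : ℝ) ≤ 13 := by exact_mod_cast p.k_le_thirteen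

lemma le_cast_a : (10864 : ℝ) ≤ p.a := by exact_mod_cast p.le_a

lemma seven_mul_a_lt : 7 * (p.a : ℝ) < p.c := by
  have : (p.k : ℝ) * p.a < p.c := by exact_mod_cast p.mul_lt_c
  nlinarith [p.seven_le, p.le_cast_a]

lemma le_c : (76048 : ℝ) ≤ p.c := by linarith [p.le_cast_a, p.seven_mul_a_lt]

lemma cast_r_sq : (p.k : ℝ) * p.a ^ 2 + 4 = p.r ^ 2 := by exact_mod_cast p.r_sq

lemma cast_s_sq : (p.a : ℝ) * p.c + 4 = p.s ^ 2 := by exact_mod_cast p.s_sq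

lemma cast_r_pos : (0 : ℝ) < p.r := by exact_mod_cast p.r_pos

lemma cast_s_pos : (0 : ℝ) < p.s := by exact_mod_cast p.s_pos

lemma r_le_c : (p.r : ℝ) ≤ p.c := by
  have h7 := p.seven_mul_a_lt
  refine le_of_sq_le_sq ?_ (by linarith [p.le_c])
  have := p.le_cast_a
  have : 13 * (p.a : ℝ) ^ 2 + 4 ≤ (7 * p.a) ^ 2 := by nlinarith
  have : (7 * (p.a : ℝ)) ^ 2 ≤ p.c ^ 2 := by gcongr
  nlinarith [p.cast_r_sq, p.le_thirteen]

lemma κ_sq : p.κ ^ 2 = p.k := Real.sq_sqrt (by linarith [p.seven_le])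

lemma Δ_sq : p.Δ ^ 2 = p.a * p.c := by
  have := p.le_cast_a
  have := p.le_c
  exact Real.sq_sqrt (by positivity)

lemma le_κ : 2.645 ≤ p.κ := Real.le_sqrt_of_sq_le (by linarith [p.seven_le])

lemma κ_le : p.κ ≤ 4 := Real.sqrt_le_iff.mpr ⟨by norm_num, by linarith [p.le_thirteen]⟩

lemma a_lt_Δ : (p.a : ℝ) < p.Δ := by
  have := p.le_cast_a
  exact Real.lt_sqrt_of_sq_lt (by nlinarith [p.seven_mul_a_lt])

lemma Δ_pos : 0 < p.Δ := by linarith [p.le_cast_a, p.a_lt_Δ]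

lemma Δ_lt_c : p.Δ < p.c :=
  (Real.sqrt_lt' (by linarith [p.le_c])).mpr (by nlinarith [p.seven_mul_a_lt, p.le_c, p.le_cast_a])

lemma not_isSquare_k : ¬IsSquare p.k := by
  rintro ⟨w, hw⟩
  have hka : 4 ≤ p.k * p.a ^ 2 := by nlinarith [p.seven_le_k, p.le_a]
  exact not_isSquare_of_add_four_eq_sq hka p.r_sq ⟨w * p.a, by rw [hw]; ring⟩

lemma isBiquadratic : IsBiquadratic p.k (p.a * p.c) p.κ p.Δ where
  sq_left := p.κ_sq
  sq_right := by rw [p.Δ_sq]; push_cast; rfl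
  not_isSquare_left := p.not_isSquare_k
  not_isSquare_right := by
    refine not_isSquare_of_add_four_eq_sq ?_ p.s_sq
    have : (4 : ℝ) ≤ p.a * p.c := by nlinarith [p.le_cast_a, p.le_c]
    exact_mod_cast this
  not_isSquare_mul := p.not_isSquare_mul

lemma τ_mul_τ' : p.τ * p.τ' = 1 := by
  rw [τ, τ']
  linear_combination (-1 / 4 : ℝ) * p.a ^ 2 * p.κ_sq - 1 / 4 * p.cast_r_sq

lemma β_mul_β' : p.β * p.β' = 1 := by
  rw [β, β']
  linear_combination (-1 / 4 : ℝ) * p.Δ_sq - 1 / 4 * p.cast_s_sq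

lemma a_mul_κ_lt_r : p.a * p.κ < p.r := by
  refine lt_of_pow_lt_pow_left₀ 2 p.cast_r_pos.le ?_
  rw [mul_pow, p.κ_sq]
  linarith [p.cast_r_sq]

lemma a_mul_κ_le_τ' : p.a * p.κ ≤ p.τ' := by
  rw [τ']
  linarith [p.a_mul_κ_lt_r]

lemma τ'_le_r : p.τ' ≤ p.r := by
  rw [τ']
  linarith [p.a_mul_κ_lt_r]

lemma le_τ' : 10864 ≤ p.τ' := by nlinarith [p.a_mul_κ_le_τ', p.le_κ, p.le_cast_a]

lemma τ_pos : 0 < p.τ := by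
  rw [τ]
  linarith [p.a_mul_κ_lt_r]

lemma τ_le : p.τ ≤ 1 / 10864 := by
  rw [le_div_iff₀ (by norm_num), ← p.τ_mul_τ']
  exact mul_le_mul_of_nonneg_left p.le_τ' p.τ_pos.le

lemma one_le_τ_mul_r : 1 ≤ p.τ * p.r :=
  p.τ_mul_τ' ▸ mul_le_mul_of_nonneg_left p.τ'_le_r p.τ_pos.le

lemma Δ_lt_s : p.Δ < p.s :=
  lt_of_pow_lt_pow_left₀ 2 p.cast_s_pos.le (by rw [p.Δ_sq]; linarith [p.cast_s_sq])

lemma β'_pos : 0 < p.β' := half_pos (sub_pos.mpr p.Δ_lt_s)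

lemma β'_lt_β : p.β' < p.β := by
  rw [β, β']
  linarith [p.Δ_pos]

lemma β_pos : 0 < p.β := p.β'_pos.trans p.β'_lt_β

lemma β_le_s : p.β ≤ p.s := by
  rw [β]
  linarith [p.Δ_lt_s]

lemma e_eq : p.e = 1 ∨ p.e = 2 := p.s_eq.imp And.left And.left

lemma τ_pow_e_mul_τ'_pow_e : p.τ ^ p.e * p.τ' ^ p.e = 1 := by
  rw [← mul_pow, p.τ_mul_τ', one_pow]

lemma κ_mul_s :
    p.κ * p.s = (p.κ + p.σ) * p.τ' ^ p.e + (p.κ - p.σ) * p.τ ^ p.e := by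
  rcases p.s_eq with ⟨he, hσ, hs⟩ | ⟨he, hs⟩
  · rw [he, hσ, hs, τ, τ']
    push_cast
    ring
  · rw [he, hs, τ, τ']
    push_cast
    linear_combination (-p.κ / 2) * p.cast_r_sq + (-(1 / 2 : ℝ) * p.a ^ 2 * p.κ) * p.κ_sq

lemma κ_add_σ_pos : 0 < p.κ + p.σ := by
  linarith [p.le_κ, (cast_mem_Icc_of_sq_eq_one p.σ_sq).1]

lemma κ_add_σ_le : p.κ + p.σ ≤ 5 := by
  linarith [p.κ_le, (cast_mem_Icc_of_sq_eq_one p.σ_sq).2]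

lemma κ_add_σ_mul_κ_sub_σ : (p.κ + p.σ) * (p.κ - p.σ) = p.k - 1 := by
  have : (p.σ : ℝ) ^ 2 = 1 := by exact_mod_cast p.σ_sq
  linear_combination p.κ_sq - this

lemma k_mul_τ_sq_le : p.k * p.τ ^ 2 ≤ 1 / 10864 ^ 2 := by
  have := p.τ_pos
  have := p.le_κ
  have hτ : 10864 * (p.κ * p.τ) ≤ 1 :=
    calc 10864 * (p.κ * p.τ) ≤ p.a * (p.κ * p.τ) := by gcongr; exact p.le_cast_a
      _ = p.τ * (p.a * p.κ) := by ring
      _ ≤ p.τ * p.τ' := by gcongr; exact p.a_mul_κ_le_τ'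
      _ = 1 := p.τ_mul_τ'
  rw [← p.κ_sq, ← mul_pow, le_div_iff₀ (by norm_num), ← mul_pow]
  exact pow_le_one₀ (by positivity) (by linarith)

lemma s_le_τ'_pow_three : p.s ≤ p.τ' ^ 3 := by
  have hτ' := p.le_τ'
  have hτ'e : p.τ' ^ p.e ≤ p.τ' ^ 2 :=
    pow_le_pow_right₀ (by linarith) (by rcases p.e_eq with h | h <;> lia)
  have hτe : p.τ ^ p.e ≤ p.τ' ^ 2 :=
    (pow_le_one₀ p.τ_pos.le (by linarith [p.τ_le])).trans (one_le_pow₀ (by linarith))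
  have hs : p.κ * p.s ≤ p.κ * (2 * p.τ' ^ 2) := by
    have := p.κ_add_σ_pos
    have : 0 ≤ p.κ - p.σ := by linarith [p.le_κ, (cast_mem_Icc_of_sq_eq_one p.σ_sq).2]
    calc p.κ * p.s = (p.κ + p.σ) * p.τ' ^ p.e + (p.κ - p.σ) * p.τ ^ p.e := p.κ_mul_s
      _ ≤ (p.κ + p.σ) * p.τ' ^ 2 + (p.κ - p.σ) * p.τ' ^ 2 := by gcongr
      _ = p.κ * (2 * p.τ' ^ 2) := by ring
  calc (p.s : ℝ) ≤ 2 * p.τ' ^ 2 := le_of_mul_le_mul_left hs (by linarith [p.le_κ])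
    _ ≤ p.τ' * p.τ' ^ 2 := by gcongr; linarith
    _ = p.τ' ^ 3 := by ring

lemma one_le_τ_pow_e_mul_c_sq : 1 ≤ p.τ ^ p.e * p.c ^ 2 := by
  have hτ := p.τ_pos
  have hτc : 1 ≤ p.τ * p.c :=
    p.one_le_τ_mul_r.trans (mul_le_mul_of_nonneg_left p.r_le_c hτ.le)
  rcases p.e_eq with he | he
  · have := p.le_c
    rw [he, pow_one, sq, ← mul_assoc]
    exact one_le_mul_of_one_le_of_one_le hτc (by linarith)
  · rw [he, ← mul_pow]
    exact one_le_pow₀ hτc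

/-- The scaling factor `κ τ ^ e / (κ + σ)` that turns `β` into a number close to `1`. -/
noncomputable def μ : ℝ := p.κ * p.τ ^ p.e / (p.κ + p.σ)

/-- The small parameter that measures how close `g` is to `1` and `h` is to `0`. -/
noncomputable def ζ : ℝ := (p.τ ^ p.e / (p.κ + p.σ)) ^ 2

/-- The number close to `1` to whose powers the Padé approximation is applied. -/
noncomputable def g : ℝ := p.μ * p.β

/-- The conjugate of `g` under `Δ ↦ -Δ`. -/
noncomputable def h : ℝ := p.μ * p.β'

lemma ζ_pos : 0 < p.ζ := by
  have := p.τ_pos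
  have := p.κ_add_σ_pos
  rw [ζ]
  positivity

lemma μ_pos : 0 < p.μ := by
  have := p.τ_pos
  have := p.κ_add_σ_pos
  have := p.le_κ
  rw [μ]
  positivity

lemma μ_sq : p.μ ^ 2 = p.k * p.ζ := by
  rw [μ, ζ, ← p.κ_sq]
  ring

lemma k_mul_ζ_le : p.k * p.ζ ≤ 6.5 / 10 ^ 10 := by
  have hU := p.κ_add_σ_pos
  have := p.κ_add_σ_le
  have hkτ := p.k_mul_τ_sq_le
  have hτ := p.τ_pos
  have := p.seven_le
  rw [ζ, div_pow, ← mul_div_assoc, div_le_iff₀ (by positivity)]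
  rcases p.s_eq with ⟨he, hσ, -⟩ | ⟨he, -⟩
  · rw [he, pow_one, hσ]
    calc p.k * p.τ ^ 2 ≤ 1 / 10864 ^ 2 := hkτ
      _ ≤ 6.5 / 10 ^ 10 * (2.645 + 1) ^ 2 := by norm_num
      _ ≤ 6.5 / 10 ^ 10 * (p.κ + (1 : ℤ)) ^ 2 := by push_cast; gcongr; exact p.le_κ
  · rw [he]
    calc p.k * (p.τ ^ 2) ^ 2 = p.k * p.τ ^ 2 * p.τ ^ 2 := by ring
      _ ≤ 1 / 10864 ^ 2 * (1 / 10864) ^ 2 := by gcongr; exact p.τ_le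
      _ ≤ 6.5 / 10 ^ 10 * 1 ^ 2 := by norm_num
      _ ≤ 6.5 / 10 ^ 10 * (p.κ + p.σ) ^ 2 := by
        gcongr
        linarith [p.le_κ, (cast_mem_Icc_of_sq_eq_one p.σ_sq).1]

lemma one_le_ζ_mul_c_pow_six : 1 ≤ p.ζ * p.c ^ 6 := by
  have := p.κ_add_σ_pos
  have hc := p.le_c
  have := p.ζ_pos
  have hτ : p.τ ^ p.e = √p.ζ * (p.κ + p.σ) := by
    have := p.τ_pos
    rw [ζ, Real.sqrt_sq (by positivity), div_mul_cancel₀ _ p.κ_add_σ_pos.ne']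
  calc (1 : ℝ) ≤ (p.τ ^ p.e * p.c ^ 2) ^ 2 := one_le_pow₀ p.one_le_τ_pow_e_mul_c_sq
    _ = p.ζ * (p.κ + p.σ) ^ 2 * p.c ^ 4 := by
      rw [hτ, mul_pow, mul_pow, Real.sq_sqrt p.ζ_pos.le]
      ring
    _ ≤ p.ζ * p.c ^ 2 * p.c ^ 4 := by
      gcongr
      linarith [p.κ_add_σ_le]
    _ = p.ζ * p.c ^ 6 := by ring

lemma h_pos : 0 < p.h := mul_pos p.μ_pos p.β'_pos

lemma h_lt_g : p.h < p.g := mul_lt_mul_of_pos_left p.β'_lt_β p.μ_pos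

lemma g_mul_h : p.g * p.h = p.k * p.ζ := by
  rw [g, h, ← p.μ_sq]
  linear_combination p.μ ^ 2 * p.β_mul_β'

lemma g_add_h : p.g + p.h = 1 + (p.k - 1) * p.ζ := by
  have hU := p.κ_add_σ_pos.ne'
  have hsum : p.g + p.h = p.κ * p.s * (p.τ ^ p.e / (p.κ + p.σ)) := by
    rw [g, h, μ, β, β']
    ring
  rw [hsum, p.κ_mul_s, ← p.κ_add_σ_mul_κ_sub_σ, ζ]
  field_simp
  linear_combination (p.κ + p.σ) * p.τ_pow_e_mul_τ'_pow_e

lemma approxPair : ApproxPair p.k p.ζ p.g p.h where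
  seven_le := p.seven_le
  le_thirteen := p.le_thirteen
  pos := p.ζ_pos
  mul_le := p.k_mul_ζ_le
  right_pos := p.h_pos
  right_lt_left := p.h_lt_g
  left_mul_right := p.g_mul_h
  one_sub_mul_one_sub := by linear_combination p.g_mul_h - p.g_add_h

/-- The coefficient of `β ^ m` in `2 κ Δ Q_m`. -/
noncomputable def B : ℝ := p.κ * (p.x₀ * p.Δ + p.z₀ * p.a)

/-- The coefficient of `β' ^ m` in `2 κ Δ Q_m`. -/
noncomputable def B' : ℝ := p.κ * (p.x₀ * p.Δ - p.z₀ * p.a)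

/-- The coefficient of `τ' ^ l` in `2 κ Δ P_l`. -/
noncomputable def A : ℝ := 2 * p.Δ * (p.κ + p.η)

/-- The coefficient of `τ ^ l` in `2 κ Δ P_l`. -/
noncomputable def A' : ℝ := 2 * p.Δ * (p.κ - p.η)

/-- The equation `P_l = Q_m`, multiplied by `2 κ Δ` and written in closed form. -/
def IsSolution (l m : ℕ) : Prop :=
  p.A * p.τ' ^ l + p.A' * p.τ ^ l = p.B * p.β ^ m + p.B' * p.β' ^ m

lemma c_sq_le : 160 * (p.c : ℝ) ^ 2 ≤ p.c ^ 3 := by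
  have := p.le_c
  rw [pow_succ' _ 2]
  gcongr
  linarith

lemma c_pow_three_le : (p.c : ℝ) ^ 3 ≤ p.c ^ 6 :=
  pow_le_pow_right₀ (by linarith [p.le_c]) (by norm_num)

lemma B_mul_B' : p.B * p.B' = 4 * (p.k * p.a * (p.c - p.a)) := by
  have hpell : (p.a : ℝ) * p.z₀ ^ 2 - p.c * p.x₀ ^ 2 = 4 * (p.a - p.c) := by exact_mod_cast p.pell
  rw [B, B', ← p.κ_sq]
  linear_combination p.κ ^ 2 * p.x₀ ^ 2 * p.Δ_sq - p.κ ^ 2 * p.a * hpell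

lemma one_le_B_mul_B' : 1 ≤ p.B * p.B' := by
  have hk := p.seven_le
  have ha := p.le_cast_a
  have hc := p.seven_mul_a_lt
  rw [p.B_mul_B']
  have : (1 : ℝ) ≤ p.k * p.a * (p.c - p.a) :=
    one_le_mul_of_one_le_of_one_le (one_le_mul_of_one_le_of_one_le (by linarith) (by linarith))
      (by linarith)
  linarith

lemma B_add_B' : p.B + p.B' = 2 * p.κ * (p.x₀ * p.Δ) := by
  rw [B, B']
  ring

lemma B_pos_and_B'_pos : 0 < p.B ∧ 0 < p.B' := by
  have hx₀ : (0 : ℝ) < p.x₀ := by exact_mod_cast p.x₀_pos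
  have hsum : 0 < p.B + p.B' := by
    have := p.le_κ
    have := p.Δ_pos
    rw [p.B_add_B']
    positivity
  rcases mul_pos_iff.mp (zero_lt_one.trans_le p.one_le_B_mul_B') with hpos | hneg
  · exact hpos
  · linarith [hneg.1, hneg.2]

lemma B_pos : 0 < p.B := p.B_pos_and_B'_pos.1

lemma B'_pos : 0 < p.B' := p.B_pos_and_B'_pos.2

lemma B_add_B'_le : p.B + p.B' ≤ p.c ^ 3 := by
  have hx₀ : (p.x₀ : ℝ) ≤ p.c := by exact_mod_cast p.x₀_le_c
  have : (0 : ℝ) < p.x₀ := by exact_mod_cast p.x₀_pos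
  have := p.Δ_pos
  have := p.le_c
  have := p.le_κ
  calc p.B + p.B' = 2 * p.κ * (p.x₀ * p.Δ) := p.B_add_B'
    _ ≤ 2 * 4 * (p.c * p.c) := by
      gcongr
      exacts [p.κ_le, p.Δ_lt_c.le]
    _ ≤ p.c ^ 3 := by nlinarith [p.c_sq_le]

lemma one_le_B_mul_c_pow_three : 1 ≤ p.B * p.c ^ 3 :=
  p.one_le_B_mul_B'.trans
    (mul_le_mul_of_nonneg_left (by linarith [p.B_add_B'_le, p.B_pos]) p.B_pos.le)

lemma one_le_A : 1 ≤ p.A :=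
  one_le_mul_of_one_le_of_one_le (by linarith [p.a_lt_Δ, p.le_cast_a])
    (by linarith [p.le_κ, (cast_mem_Icc_of_sq_eq_one p.η_sq).1])

lemma A'_pos : 0 < p.A' :=
  mul_pos (by linarith [p.Δ_pos]) (by linarith [p.le_κ, (cast_mem_Icc_of_sq_eq_one p.η_sq).2])

lemma A'_mul_A_add_A'_le : p.A' * (p.A + p.A') ≤ p.c ^ 6 * p.B := by
  have hΔ := p.Δ_pos
  have := p.le_c
  have hκ := p.le_κ
  have hη := (cast_mem_Icc_of_sq_eq_one p.η_sq).1
  have hA' : p.A' ≤ 2 * p.c * 5 := by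
    rw [A']
    gcongr
    exacts [by linarith [(cast_mem_Icc_of_sq_eq_one p.η_sq).2], p.Δ_lt_c.le, by linarith [p.κ_le]]
  calc p.A' * (p.A + p.A') = p.A' * (4 * p.Δ * p.κ) := by
        rw [A, A']
        ring
    _ ≤ 2 * p.c * 5 * (4 * p.c * 4) := by
      gcongr
      exacts [p.Δ_lt_c.le, p.κ_le]
    _ = 160 * p.c ^ 2 := by ring
    _ ≤ p.c ^ 3 := p.c_sq_le
    _ ≤ p.c ^ 3 * (p.B * p.c ^ 3) :=
      le_mul_of_one_le_right (by positivity) p.one_le_B_mul_c_pow_three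
    _ = p.c ^ 6 * p.B := by ring

/-- The small part of the scaled left-hand side of `IsSolution`. -/
noncomputable def α' (l m : ℕ) : ℝ := p.μ ^ m * (p.A' * p.τ ^ l)

/-- The dominant part of the scaled left-hand side of `IsSolution`. -/
noncomputable def α (l m : ℕ) : ℝ := p.μ ^ m * (p.A * p.τ' ^ l)

variable {p}

lemma IsSolution.A_mul_pow_le {l m : ℕ} (hlm : p.IsSolution l m) :
    p.A * p.τ' ^ l ≤ p.c ^ 3 * p.β ^ m := by
  have := p.β_pos
  have := p.β'_pos
  have := p.B'_pos
  have : 0 < p.A' * p.τ ^ l := mul_pos p.A'_pos (pow_pos p.τ_pos l)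
  calc p.A * p.τ' ^ l ≤ p.A * p.τ' ^ l + p.A' * p.τ ^ l := by linarith
    _ = p.B * p.β ^ m + p.B' * p.β' ^ m := hlm
    _ ≤ p.B * p.β ^ m + p.B' * p.β ^ m := by
      gcongr
      exact p.β'_lt_β.le
    _ = (p.B + p.B') * p.β ^ m := by ring
    _ ≤ p.c ^ 3 * p.β ^ m := by
      gcongr
      exact p.B_add_B'_le

lemma IsSolution.B_mul_pow_le {l m : ℕ} (hlm : p.IsSolution l m) :
    p.B * p.β ^ m ≤ (p.A + p.A') * p.τ' ^ l := by
  have hτ : p.τ ^ l ≤ p.τ' ^ l :=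
    pow_le_pow_left₀ p.τ_pos.le (by linarith [p.τ_le, p.le_τ']) l
  have := p.A'_pos
  calc p.B * p.β ^ m ≤ p.B * p.β ^ m + p.B' * p.β' ^ m :=
        le_add_of_nonneg_right (mul_pos p.B'_pos (pow_pos p.β'_pos m)).le
    _ = p.A * p.τ' ^ l + p.A' * p.τ ^ l := hlm.symm
    _ ≤ p.A * p.τ' ^ l + p.A' * p.τ' ^ l := by gcongr
    _ = (p.A + p.A') * p.τ' ^ l := by ring

lemma IsSolution.A'_mul_pow_le {l m : ℕ} (hlm : p.IsSolution l m) :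
    p.A' * p.τ ^ l ≤ p.c ^ 6 * p.β' ^ m := by
  have := p.A'_pos
  have hβ' := p.β'_pos
  have hτ := p.τ_pos
  have hββ' : p.β ^ m * p.β' ^ m = 1 := by rw [← mul_pow, p.β_mul_β', one_pow]
  have hττ' : p.τ ^ l * p.τ' ^ l = 1 := by rw [← mul_pow, p.τ_mul_τ', one_pow]
  refine le_of_mul_le_mul_left ?_ p.B_pos
  calc p.B * (p.A' * p.τ ^ l) = p.A' * (p.B * p.β ^ m) * (p.τ ^ l * p.β' ^ m) := by
        linear_combination -p.B * p.A' * p.τ ^ l * hββ'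
    _ ≤ p.A' * ((p.A + p.A') * p.τ' ^ l) * (p.τ ^ l * p.β' ^ m) := by
      gcongr p.A' * ?_ * (p.τ ^ l * p.β' ^ m)
      exact hlm.B_mul_pow_le
    _ = p.A' * (p.A + p.A') * p.β' ^ m := by
      linear_combination p.A' * (p.A + p.A') * p.β' ^ m * hττ'
    _ ≤ p.c ^ 6 * p.B * p.β' ^ m :=
      mul_le_mul_of_nonneg_right p.A'_mul_A_add_A'_le (by positivity)
    _ = p.B * (p.c ^ 6 * p.β' ^ m) := by ring

lemma IsSolution.approxRelation {l m : ℕ} (hlm : p.IsSolution l m) :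
    ApproxRelation (p.c ^ 6) p.g p.h p.B p.B' (p.α l m) (p.α' l m) m where
  left_le := by linarith [p.B'_pos, p.B_add_B'_le, p.c_pow_three_le]
  one_le_left_mul := p.one_le_B_mul_c_pow_three.trans
    (mul_le_mul_of_nonneg_left p.c_pow_three_le p.B_pos.le)
  right_nonneg := p.B'_pos.le
  right_le := by linarith [p.B_pos, p.B_add_B'_le, p.c_pow_three_le]
  nonneg := mul_nonneg (pow_pos p.μ_pos m).le
    (mul_nonneg (by linarith [p.one_le_A]) (pow_nonneg (by linarith [p.le_τ']) l))
  le := by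
    have hg : p.g ^ m ≤ 1 := pow_le_one₀ p.approxPair.left_pos.le p.approxPair.left_lt_one.le
    have := p.le_c
    calc p.α l m ≤ p.μ ^ m * (p.c ^ 3 * p.β ^ m) :=
          mul_le_mul_of_nonneg_left hlm.A_mul_pow_le (pow_pos p.μ_pos m).le
      _ = p.c ^ 3 * p.g ^ m := by
        rw [g, mul_pow]
        ring
      _ ≤ p.c ^ 3 := mul_le_of_le_one_right (by positivity) hg
      _ ≤ p.c ^ 6 := p.c_pow_three_le
  nonneg' := (mul_pos (pow_pos p.μ_pos m) (mul_pos p.A'_pos (pow_pos p.τ_pos l))).le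
  le' := by
    calc p.α' l m ≤ p.μ ^ m * (p.c ^ 6 * p.β' ^ m) :=
          mul_le_mul_of_nonneg_left hlm.A'_mul_pow_le (pow_pos p.μ_pos m).le
      _ = p.c ^ 6 * p.h ^ m := by
        rw [h, mul_pow]
        ring
  add_eq := by
    rw [α, α', g, h, mul_pow, mul_pow]
    unfold IsSolution at hlm
    linear_combination p.μ ^ m * hlm

variable (p)

/-- The auxiliary number attached to exponents `l` and `m`, as a function of the chosen square
roots of `k` and `a * c`. -/
noncomputable def theta (j l m : ℕ) (κ Δ : ℝ) : ℝ :=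
  auxNumber j m (κ + p.σ) (κ * ((p.r - p.a * κ) / 2) ^ p.e * ((p.s + Δ) / 2))
    (κ * (p.x₀ * Δ + p.z₀ * p.a))
    ((κ * ((p.r - p.a * κ) / 2) ^ p.e) ^ m * (2 * Δ * (κ + p.η) * ((p.r + p.a * κ) / 2) ^ l))

lemma theta_conjugates_mem (j l m : ℕ) :
    (fun ε : ℤˣ × ℤˣ => p.theta j l m (ε.1 * p.κ) (ε.2 * p.Δ)) ∈
      p.isBiquadratic.integralConjugates := by
  set S := p.isBiquadratic.integralConjugates
  have hκ := p.isBiquadratic.left_mem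
  have hΔ := p.isBiquadratic.right_mem
  have hβ := p.isBiquadratic.half_add_right_mem p.s_sq
  have hτ' := p.isBiquadratic.half_add_mul_left_mem p.r_sq
  have hτ := p.isBiquadratic.half_add_mul_left_mem (a := -p.a) (r := p.r)
    (by rw [neg_sq]; exact p.r_sq)
  have hκτ := mul_mem hκ (pow_mem hτ p.e)
  convert auxNumber_mem S j m (add_mem hκ (intCast_mem S p.σ)) (mul_mem hκτ hβ)
    (mul_mem hκ (add_mem (mul_mem (intCast_mem S p.x₀) hΔ)
      (intCast_mem S (p.z₀ * p.a))))
    (mul_mem (pow_mem hκτ m) (mul_mem (mul_mem (mul_mem (intCast_mem S 2) hΔ)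
      (add_mem hκ (intCast_mem S p.η))) (pow_mem hτ' l))) using 1
  funext ε
  refine Eq.trans ?_ (map_auxNumber (Pi.evalRingHom (fun _ => ℝ) ε) j m _ _ _ _).symm
  simp [theta, sub_eq_add_neg]

theorem one_le_abs_prod_theta {j l m : ℕ} (hne : p.theta j l m p.κ p.Δ ≠ 0) :
    1 ≤ |p.theta j l m p.κ p.Δ| * |p.theta j l m p.κ (-p.Δ)| *
      |p.theta j l m (-p.κ) p.Δ| * |p.theta j l m (-p.κ) (-p.Δ)| := by
  have hmem := p.theta_conjugates_mem j l m
  have := p.isBiquadratic.one_le_abs_prod_conjugates hmem.1 hmem.2 (by simpa using hne)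
  simpa [Fintype.prod_prod_type, UnitsInt.univ, prod_pair (show (1 : ℤˣ) ≠ -1 by decide), abs_mul,
    mul_assoc] using this

lemma κ_mul_τ_pow_e : p.κ * p.τ ^ p.e = (p.κ + p.σ) * p.μ := by
  rw [μ, mul_div_cancel₀ _ p.κ_add_σ_pos.ne']

lemma neg_κ_mul_τ'_pow_e : -p.κ * p.τ' ^ p.e = -1 / (p.κ + p.σ) * (p.μ / p.ζ) := by
  have hU := p.κ_add_σ_pos.ne'
  have hτ := (pow_pos p.τ_pos p.e).ne'
  rw [μ, ζ]
  field_simp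
  linear_combination -p.κ * p.τ_pow_e_mul_τ'_pow_e

lemma neg_κ_add_σ : -p.κ + p.σ = -1 / (p.κ + p.σ) * (p.k - 1) := by
  have hU := p.κ_add_σ_pos.ne'
  rw [← p.κ_add_σ_mul_κ_sub_σ]
  field_simp
  ring

lemma theta_κ_Δ (j l m : ℕ) : p.theta j l m p.κ p.Δ =
    (p.κ + p.σ) ^ (m + j) * auxNumber j m 1 p.g p.B (p.α l m) := by
  rw [← auxNumber_mul, theta, ← τ, ← τ', ← β, ← B, ← A, p.κ_mul_τ_pow_e]
  congr 1
  · rw [mul_one]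
  · rw [g, mul_assoc]
  · rw [α, mul_pow, mul_assoc]

lemma theta_κ_neg_Δ (j l m : ℕ) : p.theta j l m p.κ (-p.Δ) =
    -((p.κ + p.σ) ^ (m + j) * auxNumber j m 1 p.h p.B' (p.α l m)) := by
  rw [← auxNumber_mul, ← auxNumber_neg_neg, theta, ← τ, ← τ', ← sub_eq_add_neg, ← β',
    p.κ_mul_τ_pow_e]
  congr 1
  · rw [mul_one]
  · rw [h, mul_assoc]
  · rw [B']
    ring
  · rw [α, A, mul_pow]
    ring

lemma theta_neg_κ_Δ (j l m : ℕ) : p.theta j l m (-p.κ) p.Δ =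
    -((-1 / (p.κ + p.σ)) ^ (m + j) *
      auxNumber j m (p.k - 1 : ℝ) (p.g / p.ζ) p.B (p.α' l m / p.ζ ^ m)) := by
  rw [← auxNumber_mul, ← auxNumber_neg_neg, theta, mul_neg, sub_neg_eq_add, ← sub_eq_add_neg, ← τ,
    ← τ', ← β, p.neg_κ_mul_τ'_pow_e, p.neg_κ_add_σ]
  congr 1
  · rw [g]
    ring
  · rw [B]
    ring
  · rw [α', A', mul_pow, div_pow p.μ]
    ring

lemma theta_neg_κ_neg_Δ (j l m : ℕ) : p.theta j l m (-p.κ) (-p.Δ) =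
    (-1 / (p.κ + p.σ)) ^ (m + j) *
      auxNumber j m (p.k - 1 : ℝ) (p.h / p.ζ) p.B' (p.α' l m / p.ζ ^ m) := by
  rw [← auxNumber_mul, theta, mul_neg, sub_neg_eq_add, ← sub_eq_add_neg, ← sub_eq_add_neg, ← τ,
    ← τ', ← β', p.neg_κ_mul_τ'_pow_e, p.neg_κ_add_σ]
  congr 1
  · rw [h]
    ring
  · rw [B']
    ring
  · rw [α', A', mul_pow, div_pow p.μ]
    ring

theorem one_le_abs_prod_auxNumber {j l m : ℕ}
    (hne : auxNumber j m 1 p.g p.B (p.α l m) ≠ 0) :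
    1 ≤ |auxNumber j m 1 p.g p.B (p.α l m)| * |auxNumber j m 1 p.h p.B' (p.α l m)| *
      |auxNumber j m (p.k - 1 : ℝ) (p.g / p.ζ) p.B (p.α' l m / p.ζ ^ m)| *
      |auxNumber j m (p.k - 1 : ℝ) (p.h / p.ζ) p.B' (p.α' l m / p.ζ ^ m)| := by
  have hU := p.κ_add_σ_pos
  have hθ : p.theta j l m p.κ p.Δ ≠ 0 := by
    rw [theta_κ_Δ]
    exact mul_ne_zero (pow_pos hU _).ne' hne
  refine (p.one_le_abs_prod_theta hθ).trans_eq ?_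
  rw [theta_κ_Δ, theta_κ_neg_Δ, theta_neg_κ_Δ, theta_neg_κ_neg_Δ]
  simp only [abs_neg, abs_mul, abs_pow, abs_div, abs_one, abs_of_pos hU, div_pow, one_pow]
  field_simp

lemma one_le_log_c : 1 ≤ Real.log p.c := by
  rw [Real.le_log_iff_exp_le (by linarith [p.le_c])]
  linarith [Real.exp_one_lt_d9, p.le_c]

variable {p}

theorem IsSolution.two_pow_le {l n ρ : ℕ} (hlm : p.IsSolution l (7 * n + ρ)) (hρ : ρ ≤ 6) :
    (2 : ℝ) ^ n ≤ (p.c ^ 6) ^ 9 := by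
  have hc := p.le_c
  rcases n.eq_zero_or_pos with rfl | hn0
  · exact one_le_pow₀ (one_le_pow₀ (by linarith))
  by_contra! hn
  have hZ : (10000 : ℝ) ≤ p.c ^ 6 :=
    (by linarith : (10000 : ℝ) ≤ p.c).trans (le_self_pow₀ (by linarith) (by norm_num))
  have hne := p.approxPair.auxNumber_one_left_ne_zero hlm.approxRelation (j := 3 * n) (by lia)
    (by lia) (by linarith) (p.approxPair.nonvanishing_margin hZ hn p.one_le_ζ_mul_c_pow_six)
  exact (p.one_le_abs_prod_auxNumber hne).not_gt
    (p.approxPair.abs_auxNumber_mul_lt_one hlm.approxRelation hn0 hρ hZ hn)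

lemma IsSolution.le_log_add {l m : ℕ} (hlm : p.IsSolution l m) :
    (l : ℝ) ≤ 3 * Real.log p.c + 3 * m := by
  have hc := p.le_c
  have hτ' := p.le_τ'
  have := p.β_pos
  have hpow : p.τ' ^ l ≤ p.c ^ 3 * (p.τ' ^ 3) ^ m :=
    calc p.τ' ^ l ≤ p.A * p.τ' ^ l := le_mul_of_one_le_left (by positivity) p.one_le_A
      _ ≤ p.c ^ 3 * p.β ^ m := hlm.A_mul_pow_le
      _ ≤ p.c ^ 3 * (p.τ' ^ 3) ^ m := by
        gcongr
        exact p.β_le_s.trans p.s_le_τ'_pow_three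
  have hlog := Real.log_le_log (by positivity) hpow
  rw [Real.log_mul (by positivity) (by positivity)] at hlog
  simp only [Real.log_pow] at hlog
  push_cast at hlog
  have hτ'log : 1 ≤ Real.log p.τ' := by
    rw [Real.le_log_iff_exp_le (by linarith)]
    linarith [Real.exp_one_lt_d9]
  refine le_of_mul_le_mul_right ?_ (zero_lt_one.trans_le hτ'log)
  nlinarith [p.one_le_log_c]

theorem IsSolution.lt_mul_log {l m : ℕ} (hlm : p.IsSolution l m) :
    (l : ℝ) < 2000 * Real.log p.c := by
  have hlog := p.one_le_log_c
  have hpow : (2 : ℝ) ^ (m / 7) ≤ (p.c ^ 6) ^ 9 :=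
    IsSolution.two_pow_le (l := l) (ρ := m % 7) (by rwa [Nat.div_add_mod]) (by lia)
  have hn : ((m / 7 : ℕ) : ℝ) * Real.log 2 ≤ 54 * Real.log p.c := by
    have := Real.log_le_log (by positivity) hpow
    simp only [Real.log_pow] at this
    push_cast at this ⊢
    linarith
  have hm : (m : ℝ) ≤ 7 * (m / 7 : ℕ) + 6 := by exact_mod_cast (by lia : m ≤ 7 * (m / 7) + 6)
  nlinarith [hlm.le_log_add, Real.log_two_gt_d9, Nat.cast_nonneg (α := ℝ) (m / 7)]

variable (p)

theorem isSolution_of_recurrence {P Q : ℕ → ℤ} (hP0 : P 0 = 2)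
    (hP1 : 2 * P 1 = p.r * 2 + p.a * (2 * p.η)) (hP : ∀ i, P (i + 2) = p.r * P (i + 1) - P i)
    (hQ0 : Q 0 = p.x₀) (hQ1 : 2 * Q 1 = p.s * p.x₀ + p.a * p.z₀)
    (hQ : ∀ i, Q (i + 2) = p.s * Q (i + 1) - Q i) {l m : ℕ} (heq : P l = Q m) :
    p.IsSolution l m := by
  have hP1' : 2 * (P 1 : ℝ) = p.r * 2 + p.a * (2 * p.η) := by exact_mod_cast hP1
  have hQ1' : 2 * (Q 1 : ℝ) = p.s * p.x₀ + p.a * p.z₀ := by exact_mod_cast hQ1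
  have hPl : 2 * p.κ * p.Δ * P l = p.A * p.τ' ^ l + p.A' * p.τ ^ l := by
    refine mul_eq_of_recurrence (f := fun i ↦ (P i : ℝ)) (r := p.r) (fun i ↦ by simp [hP])
      (by rw [τ, τ']; ring) (by rw [mul_comm, p.τ_mul_τ']) ?_ ?_ l
    · rw [hP0, A, A']
      push_cast
      ring
    · rw [A, A', τ, τ']
      linear_combination p.κ * p.Δ * hP1'
  have hQm : 2 * p.κ * p.Δ * Q m = p.B * p.β ^ m + p.B' * p.β' ^ m := by
    refine mul_eq_of_recurrence (f := fun i ↦ (Q i : ℝ)) (r := p.s) (fun i ↦ by simp [hQ])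
      (by rw [β, β']; ring) p.β_mul_β' ?_ ?_ m
    · rw [hQ0, B, B']
      ring
    · rw [B, B', β, β']
      linear_combination p.κ * p.Δ * hQ1'
  rw [IsSolution, ← hPl, ← hQm, heq]

end PellSystem

section Extensions

variable {k a r c s : ℤ}

lemma two_mul_lt_add_of_mul_sq_add_four (hk : 7 ≤ k) (ha : 1 ≤ a) (hr : k * a ^ 2 + 4 = r ^ 2) :
    2 * r < a + k * a := by
  have hka : 6 * 1 ≤ (k - 1) * a := mul_le_mul (by lia) ha (by norm_num) (by lia)
  exact lt_of_pow_lt_pow_left₀ 2 (by nlinarith) (by nlinarith)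

lemma mul_lt_of_extension (hk : 7 ≤ k) (ha : 1 ≤ a) (hr0 : 0 < r) (hr : k * a ^ 2 + 4 = r ^ 2)
    (hc : c = a + k * a + 2 * r ∨ c = (a * (k * a) + 4) * (a + k * a + 2 * r) - 4 * r ∨
      c = (a * (k * a) + 4) * (a + k * a - 2 * r) + 4 * r) : k * a < c := by
  have hsum := two_mul_lt_add_of_mul_sq_add_four hk ha hr
  have hab : a * (k * a) + 4 = r ^ 2 := by rw [← hr]; ring
  have hkr : k * a < r ^ 2 := by nlinarith
  rw [hab] at hc
  rcases hc with rfl | rfl | rfl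
  · lia
  · nlinarith
  · nlinarith

lemma exists_exponent_sign_of_extension (hk : 7 ≤ k) (ha : 1 ≤ a) (hr0 : 0 < r)
    (hr : k * a ^ 2 + 4 = r ^ 2)
    (hc : c = a + k * a + 2 * r ∨ c = (a * (k * a) + 4) * (a + k * a + 2 * r) - 4 * r ∨
      c = (a * (k * a) + 4) * (a + k * a - 2 * r) + 4 * r)
    (hs0 : 0 < s) (hs : a * c + 4 = s ^ 2) :
    ∃ (e : ℕ) (σ : ℤ), σ ^ 2 = 1 ∧
      (e = 1 ∧ σ = 1 ∧ s = r + a ∨ e = 2 ∧ s = r ^ 2 + σ * (r * a) - 2) := by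
  have har : 2 * a < r := lt_of_pow_lt_pow_left₀ 2 hr0.le (by nlinarith)
  rcases hc with rfl | rfl | rfl
  · refine ⟨1, 1, by norm_num, .inl ⟨rfl, rfl, ?_⟩⟩
    exact (pow_left_inj₀ hs0.le (by lia) two_ne_zero).mp (by linear_combination hr - hs)
  · refine ⟨2, 1, by norm_num, .inr ⟨rfl, ?_⟩⟩
    refine (pow_left_inj₀ hs0.le (by nlinarith) two_ne_zero).mp ?_
    linear_combination (r ^ 2 + 2 * a * r + a ^ 2 + k * a ^ 2) * hr - hs
  · refine ⟨2, -1, by norm_num, .inr ⟨rfl, ?_⟩⟩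
    refine (pow_left_inj₀ hs0.le (by nlinarith) two_ne_zero).mp ?_
    linear_combination (r ^ 2 - 2 * a * r + a ^ 2 + k * a ^ 2) * hr - hs

end Extensions

lemma div_log_exp_one_mul_le (l : ℕ) : (l : ℝ) / Real.log (Real.exp 1 * l) ≤ l := by
  rcases l.eq_zero_or_pos with rfl | hl
  · simp
  · rw [Real.log_mul (Real.exp_pos 1).ne' (by positivity), Real.log_exp]
    exact div_le_self l.cast_nonneg (le_add_of_nonneg_right (Real.log_natCast_nonneg l))

lemma mul_log_le_mul_log_sq {c : ℝ} (hc : 1 ≤ c) :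
    2000 * Real.log c ≤ 3.34 * 10 ^ 13 * Real.log (8.09 * c ^ 2) ^ 2 := by
  have hlogc : 0 ≤ Real.log c := Real.log_nonneg hc
  have hlog8 : 1 ≤ Real.log 8.09 := by
    rw [Real.le_log_iff_exp_le (by norm_num)]
    linarith [Real.exp_one_lt_d9]
  rw [Real.log_mul (by norm_num) (by positivity), Real.log_pow]
  push_cast
  nlinarith

theorem matveev_upper_bound_c1_plus_c2_general {k a r c s t : ℤ} (hk : 7 ≤ k) (hk' : k ≤ 13)
    (ha : 10864 ≤ a) (hr0 : 0 < r) (hr : k * a ^ 2 + 4 = r ^ 2)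
    (hc : c = a + k * a + 2 * r ∨ c = (a * (k * a) + 4) * (a + k * a + 2 * r) - 4 * r ∨
      c = (a * (k * a) + 4) * (a + k * a - 2 * r) + 4 * r)
    (hs0 : 0 < s) (hs : a * c + 4 = s ^ 2) (ht : k * a * c + 4 = t ^ 2)
    {y₂ x₀ z₀ : ℤ} (hy₂ : y₂ = 2 ∨ y₂ = -2) (hx₀ : 0 < x₀) (hx₀c : x₀ ≤ c)
    (hpell : a * z₀ ^ 2 - c * x₀ ^ 2 = 4 * (a - c)) {P Q : ℕ → ℤ}
    (hP0 : P 0 = 2) (hP1 : 2 * P 1 = r * 2 + a * y₂) (hP : ∀ i, P (i + 2) = r * P (i + 1) - P i)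
    (hQ0 : Q 0 = x₀) (hQ1 : 2 * Q 1 = s * x₀ + a * z₀)
    (hQ : ∀ i, Q (i + 2) = s * Q (i + 1) - Q i) {l m : ℕ} (heq : P l = Q m) :
    (l : ℝ) < 2000 * Real.log c := by
  obtain ⟨η, hη, rfl⟩ : ∃ η : ℤ, η ^ 2 = 1 ∧ y₂ = 2 * η := by
    rcases hy₂ with rfl | rfl
    exacts [⟨1, by norm_num, by norm_num⟩, ⟨-1, by norm_num, by norm_num⟩]
  have hkac := mul_lt_of_extension hk (by lia) hr0 hr hc
  obtain ⟨e, σ, hσ, hse⟩ := exists_exponent_sign_of_extension hk (by lia) hr0 hr hc hs0 hs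
  have hsq : ¬IsSquare (k * (a * c)) := by
    rw [← mul_assoc]
    exact not_isSquare_of_add_four_eq_sq (by nlinarith) ht
  let p : PellSystem := {
    k, a, c, r, s, σ, η, x₀, z₀, e
    seven_le_k := hk, k_le_thirteen := hk', le_a := ha, mul_lt_c := hkac
    r_pos := hr0, r_sq := hr, s_pos := hs0, s_sq := hs, not_isSquare_mul := hsq
    σ_sq := hσ, s_eq := hse, η_sq := hη
    x₀_pos := hx₀, x₀_le_c := hx₀c, pell := hpell }
  exact (p.isSolution_of_recurrence hP0 hP1 hP hQ0 hQ1 hQ heq).lt_mul_log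

/-- For `k ∈ {7,8,10,11,12,13}`, `a ≥ 10864`, `b = ka` and `c ∈ {c₁⁺, c₂⁺, c₂⁻}`: if
`P_l = Q_m` has a solution `(l, m)` with `m ≥ 3`, then
`l / log(e·l) < 3.34·10¹³·(log(8.09·c²))²` for solutions of Type 1, and
`l / log(e·l) < 6.63·10¹³·(log(8.09·c²))²` for solutions of Type 2. -/
theorem matveev_upper_bound_c1_plus_c2
    (k a r b c s t : ℤ)
    (hk : k ∈ ({7, 8, 10, 11, 12, 13} : Set ℤ)) (ha : 0 < a) (ha2 : 10864 ≤ a)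
    (hr : 0 < r) (hr2 : k * a ^ 2 + 4 = r ^ 2) (hb : b = k * a)
    (hc : c = a + b + 2 * r ∨ c = (a * b + 4) * (a + b + 2 * r) - 4 * r ∨
          c = (a * b + 4) * (a + b - 2 * r) + 4 * r)
    (hs : 0 < s) (hs2 : a * c + 4 = s ^ 2) (ht : 0 < t) (ht2 : b * c + 4 = t ^ 2)
    (x₂ y₂ x₀ z₀ : ℤ)
    (hx₂ : x₂ = 2) (hy₂ : y₂ = 2 ∨ y₂ = -2)
    (P Q : ℕ → ℤ)
    (hP0 : P 0 = x₂) (hP1 : 2 * P 1 = r * x₂ + a * y₂)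
    (hPrec : ∀ i : ℕ, P (i + 2) = r * P (i + 1) - P i)
    (hQ0 : Q 0 = x₀) (hQ1 : 2 * Q 1 = s * x₀ + a * z₀)
    (hQrec : ∀ i : ℕ, Q (i + 2) = s * Q (i + 1) - Q i)
    (l m : ℕ) (hm : 3 ≤ m) (heq : P l = Q m) :
    ((x₀ = 2 ∧ (z₀ = 2 ∨ z₀ = -2)) →
      (l : ℝ) / Real.log (Real.exp 1 * (l : ℝ)) <
        3.34 * 10 ^ 13 * (Real.log (8.09 * (c : ℝ) ^ 2)) ^ 2) ∧
    ((x₀ = r ∧ (z₀ = t ∨ z₀ = -t)) →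
      (l : ℝ) / Real.log (Real.exp 1 * (l : ℝ)) <
        6.63 * 10 ^ 13 * (Real.log (8.09 * (c : ℝ) ^ 2)) ^ 2) := by
  have hk7 : 7 ≤ k ∧ k ≤ 13 := by
    simp only [Set.mem_insert_iff, Set.mem_singleton_iff] at hk
    lia
  subst hb hx₂
  have hkac := mul_lt_of_extension hk7.1 ha hr hr2 hc
  have hrc : r ≤ c := by nlinarith [two_mul_lt_add_of_mul_sq_add_four hk7.1 ha hr2]
  have hc1 : (1 : ℝ) ≤ c := by exact_mod_cast (by lia : 1 ≤ c)
  have hbound (hx₀ : 0 < x₀) (hx₀c : x₀ ≤ c) (hpell : a * z₀ ^ 2 - c * x₀ ^ 2 = 4 * (a - c)) :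
      (l : ℝ) / Real.log (Real.exp 1 * (l : ℝ)) <
        3.34 * 10 ^ 13 * (Real.log (8.09 * (c : ℝ) ^ 2)) ^ 2 :=
    (div_log_exp_one_mul_le l).trans_lt <|
      (matveev_upper_bound_c1_plus_c2_general hk7.1 hk7.2 ha2 hr hr2 hc hs hs2 ht2 hy₂ hx₀ hx₀c
        hpell hP0 hP1 hPrec hQ0 hQ1 hQrec heq).trans_le (mul_log_le_mul_log_sq hc1)
  constructor
  · rintro ⟨rfl, rfl | rfl⟩ <;> exact hbound (by norm_num) (by nlinarith) (by ring)
  · rintro ⟨rfl, hz₀⟩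
    have hz₀t : z₀ ^ 2 = t ^ 2 := sq_eq_sq_iff_eq_or_eq_neg.mpr hz₀
    refine (hbound hr hrc ?_).trans_le (by gcongr; norm_num)
    linear_combination a * hz₀t - a * ht2 + c * hr2
end

section
/- Let k ∈ {7, 8, 10, 11, 12, 13} and let a be a positive integer with k·a² + 4 = r² a perfect square. Set b = ka, c = a + b − 2r and s = r − a, and assume a < c < b. Consider a solution of Type 1, i.e. (x₂, y₂) = (2, ±2) and (x₀, z₀) = (2, ±2). If P_l = Q_m for even integers l, m with 1 ≤ l ≤ m, then either (l, m) = (2, 2) or m ≥ (1/4)·(−2 + √(4 + √a)). -/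
/-!
Write `y₂ = 2 ε` and `z₀ = 2 φ`. Modulo `a ^ 2` one has `r ^ 2 = 4`, so `s ^ 2 - 4 = -2 a r`
squares to zero, and the even-indexed terms become polynomials in the index:
`P (2 i) ≡ 2 + a r ε i` and `Q (2 j) ≡ 2 + a r (φ j - 2 j ^ 2)`. Equating them and multiplying
by `r` gives `a ∣ 4 (2 j ^ 2 + ε i - φ j)`. For `1 ≤ i ≤ j` the second factor lies between `0` and
`2 j ^ 2 + 2 j` and vanishes only if `i = j = 1`; otherwise `a ≤ 8 j ^ 2 + 8 j`.
-/

section CommRing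

variable {R : Type*} [CommRing R]

theorem even_index_recurrence {r : R} {u : ℕ → R}
    (hu : ∀ n, u (n + 2) = r * u (n + 1) - u n) (n : ℕ) :
    u (2 * (n + 2)) = (r ^ 2 - 2) * u (2 * (n + 1)) - u (2 * n) := by
  have h₂ : u (2 * (n + 1)) = r * u (2 * n + 1) - u (2 * n) := hu (2 * n)
  have h₃ : u (2 * n + 3) = r * u (2 * (n + 1)) - u (2 * n + 1) := hu (2 * n + 1)
  have h₄ : u (2 * (n + 2)) = r * u (2 * n + 3) - u (2 * (n + 1)) := hu (2 * n + 2)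
  linear_combination h₄ + r * h₃ + h₂

theorem eq_quadratic_of_recurrence {δ γ : R} {u : ℕ → R} (hδ : δ ^ 2 = 0) (hδγ : δ * γ = 0)
    (h₀ : u 0 = 2) (h₁ : u 1 = 2 + δ + γ) (hu : ∀ n, u (n + 2) = (2 + δ) * u (n + 1) - u n)
    (n : ℕ) : u n = 2 + n ^ 2 * δ + n * γ := by
  induction n using Nat.twoStepInduction with
  | zero => simp [h₀]
  | one => simp [h₁]
  | more n ih ih' =>
    rw [hu, ih, ih']
    push_cast
    linear_combination (n + 1) ^ 2 * hδ + (n + 1) * hδγ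

theorem even_index_eq_quadratic {r g : R} {u : ℕ → R} (hr : (r ^ 2 - 4) ^ 2 = 0)
    (hrg : (r ^ 2 - 4) * g = 0) (h₀ : u 0 = 2) (h₁ : u 1 = r + g)
    (hu : ∀ n, u (n + 2) = r * u (n + 1) - u n) (n : ℕ) :
    u (2 * n) = 2 + n ^ 2 * (r ^ 2 - 4) + n * (r * g) := by
  refine eq_quadratic_of_recurrence (u := fun n ↦ u (2 * n)) hr ?_ h₀ ?_ (fun n ↦ ?_) n
  · linear_combination r * hrg
  · linear_combination hu 0 + r * h₁ - h₀
  · linear_combination even_index_recurrence hu n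

theorem four_mul_mul_eq_zero_of_even_index_eq {a r ε φ : R} {P Q : ℕ → R}
    (ha : a ^ 2 = 0) (hr : r ^ 2 = 4) (hP₀ : P 0 = 2) (hP₁ : P 1 = r + a * ε)
    (hP : ∀ n, P (n + 2) = r * P (n + 1) - P n) (hQ₀ : Q 0 = 2) (hQ₁ : Q 1 = r - a + a * φ)
    (hQ : ∀ n, Q (n + 2) = (r - a) * Q (n + 1) - Q n) {i j : ℕ} (h : P (2 * i) = Q (2 * j)) :
    4 * a * (2 * j ^ 2 + ε * i - φ * j) = 0 := by
  have hs : (r - a) ^ 2 - 4 = -2 * a * r := by linear_combination hr + ha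
  have hPi : P (2 * i) = 2 + a * r * ε * i := by
    rw [even_index_eq_quadratic (by simp [hr]) (by simp [hr]) hP₀ hP₁ hP, hr]
    ring
  have hQj : Q (2 * j) = 2 + a * r * (φ * j - 2 * j ^ 2) := by
    rw [even_index_eq_quadratic (by rw [hs]; linear_combination 4 * r ^ 2 * ha)
      (by rw [hs]; linear_combination -2 * r * φ * ha) hQ₀ hQ₁ hQ, hs]
    linear_combination -φ * j * ha
  have har : a * r * (2 * j ^ 2 + ε * i - φ * j) = 0 := by linear_combination h - hPi + hQj
  linear_combination r * har - a * (2 * j ^ 2 + ε * i - φ * j) * hr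

end CommRing

theorem dvd_four_mul_of_even_index_eq {a r ε φ : ℤ} {P Q : ℕ → ℤ} (ha : a ≠ 0)
    (hr : a ^ 2 ∣ r ^ 2 - 4) (hP₀ : P 0 = 2) (hP₁ : P 1 = r + a * ε)
    (hP : ∀ n, P (n + 2) = r * P (n + 1) - P n) (hQ₀ : Q 0 = 2) (hQ₁ : Q 1 = r - a + a * φ)
    (hQ : ∀ n, Q (n + 2) = (r - a) * Q (n + 1) - Q n) {i j : ℕ} (h : P (2 * i) = Q (2 * j)) :
    a ∣ 4 * (2 * j ^ 2 + ε * i - φ * j) := by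
  have cast_eq_zero_iff (x : ℤ) : (x : ZMod (a.natAbs ^ 2)) = 0 ↔ a ^ 2 ∣ x := by
    rw [CharP.intCast_eq_zero_iff _ (a.natAbs ^ 2), Nat.cast_pow, Int.natAbs_sq]
  have ha_sq : (a : ZMod (a.natAbs ^ 2)) ^ 2 = 0 := mod_cast (cast_eq_zero_iff _).2 dvd_rfl
  have hr_sq : (r : ZMod (a.natAbs ^ 2)) ^ 2 = 4 :=
    sub_eq_zero.1 (mod_cast (cast_eq_zero_iff _).2 hr)
  have hzero := four_mul_mul_eq_zero_of_even_index_eq (R := ZMod (a.natAbs ^ 2)) (ε := ε) (φ := φ)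
    (P := fun n ↦ P n) (Q := fun n ↦ Q n) ha_sq hr_sq (by simp [hP₀]) (by simp [hP₁])
    (by simp [hP]) (by simp [hQ₀]) (by simp [hQ₁]) (by simp [hQ]) (congrArg Int.cast h)
  have hdvd : a ^ 2 ∣ 4 * a * (2 * j ^ 2 + ε * i - φ * j) :=
    (cast_eq_zero_iff _).1 (mod_cast hzero)
  refine (mul_dvd_mul_iff_left ha).1 ?_
  rwa [← sq, mul_left_comm, ← mul_assoc]

theorem abs_mul_sub_mul_le_two_mul {R : Type*} [CommRing R] [LinearOrder R] [IsStrictOrderedRing R]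
    {ε φ i j : R} (hε : |ε| ≤ 1) (hφ : |φ| ≤ 1) (hi : 0 ≤ i) (hij : i ≤ j) :
    |ε * i - φ * j| ≤ 2 * j :=
  have hj : 0 ≤ j := hi.trans hij
  calc |ε * i - φ * j| ≤ |ε * i| + |φ * j| := abs_sub (ε * i) (φ * j)
    _ = |ε| * i + |φ| * j := by rw [abs_mul, abs_mul, abs_of_nonneg hi, abs_of_nonneg hj]
    _ ≤ 1 * j + 1 * j := by gcongr
    _ = 2 * j := by ring

theorem le_of_dvd_four_mul {a ε φ i j : ℤ} (hε : |ε| ≤ 1) (hφ : |φ| ≤ 1) (hi : 0 ≤ i)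
    (hij : i ≤ j) (hj : 1 < j) (h : a ∣ 4 * (2 * j ^ 2 + ε * i - φ * j)) :
    a ≤ 8 * j ^ 2 + 8 * j := by
  obtain ⟨hlower, hupper⟩ := abs_le.1 (abs_mul_sub_mul_le_two_mul hε hφ hi hij)
  have hpos : 0 < 4 * (2 * j ^ 2 + ε * i - φ * j) := by nlinarith
  linarith [Int.le_of_dvd hpos h]

theorem quarter_mul_neg_two_add_sqrt_le {a : ℝ} {m : ℕ} (h : a ≤ 2 * m * (m + 2)) :
    1 / 4 * (-2 + √(4 + √a)) ≤ m := by
  have hN : a ≤ ((16 * m * (m + 1) : ℕ) : ℝ) := by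
    push_cast
    nlinarith [(m.cast_nonneg : (0 : ℝ) ≤ m)]
  have hinner : √a ≤ (16 * m * (m + 1) : ℕ) :=
    Real.sqrt_le_iff.2 ⟨Nat.cast_nonneg _, hN.trans (mod_cast Nat.le_self_pow two_ne_zero _)⟩
  have houter : √(4 + √a) ≤ 4 * m + 2 := by
    refine Real.sqrt_le_iff.2 ⟨by positivity, ?_⟩
    push_cast at hinner
    linarith
  linarith

theorem exists_eq_two_mul_abs_eq_one {y : ℤ} (hy : y = 2 ∨ y = -2) :
    ∃ ε : ℤ, y = 2 * ε ∧ |ε| = 1 := by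
  rcases hy with rfl | rfl
  exacts [⟨1, by simp⟩, ⟨-1, by simp⟩]

theorem lower_bound_on_m_c1_minus_general {a r y z : ℤ} {P Q : ℕ → ℤ} {l m : ℕ} (ha : 0 < a)
    (hr : a ^ 2 ∣ r ^ 2 - 4) (hy : y = 2 ∨ y = -2) (hz : z = 2 ∨ z = -2)
    (hP₀ : P 0 = 2) (hP₁ : 2 * P 1 = r * 2 + a * y) (hP : ∀ n, P (n + 2) = r * P (n + 1) - P n)
    (hQ₀ : Q 0 = 2) (hQ₁ : 2 * Q 1 = (r - a) * 2 + a * z)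
    (hQ : ∀ n, Q (n + 2) = (r - a) * Q (n + 1) - Q n)
    (hl : Even l) (hm : Even m) (hl₁ : 1 ≤ l) (hlm : l ≤ m) (h : P l = Q m) :
    (l = 2 ∧ m = 2) ∨ a ≤ 2 * m * (m + 2) := by
  obtain ⟨ε, rfl, hε⟩ := exists_eq_two_mul_abs_eq_one hy
  obtain ⟨φ, rfl, hφ⟩ := exists_eq_two_mul_abs_eq_one hz
  obtain ⟨i, rfl⟩ := hl.two_dvd
  obtain ⟨j, rfl⟩ := hm.two_dvd
  have hdvd : a ∣ 4 * (2 * j ^ 2 + ε * i - φ * j) :=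
    dvd_four_mul_of_even_index_eq ha.ne' hr hP₀ (by linarith) hP hQ₀ (by linarith) hQ h
  obtain hj | hj : j = 1 ∨ 1 < j := by lia
  · left
    lia
  · right
    have hle : a ≤ 8 * j ^ 2 + 8 * j :=
      le_of_dvd_four_mul hε.le hφ.le (by lia) (by lia) (by lia) hdvd
    push_cast
    linarith

/-- For `k ∈ {7,8,10,11,12,13}`, `b = ka`, `c = c₁⁻ = a + b − 2r`, `s = r − a`, with a
solution of Type 1: if `P_l = Q_m` for even `l, m` with `1 ≤ l ≤ m`, then `(l, m) = (2, 2)`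
or `m ≥ (1/4)·(−2 + √(4 + √a))`. -/
theorem lower_bound_on_m_c1_minus
    (k a r b c s : ℤ)
    (hk : k ∈ ({7, 8, 10, 11, 12, 13} : Set ℤ)) (ha : 0 < a) (hr : 0 < r)
    (hr2 : k * a ^ 2 + 4 = r ^ 2) (hb : b = k * a)
    (hc : c = a + b - 2 * r) (hs : s = r - a) (hac : a < c) (hcb : c < b)
    (x₂ y₂ x₀ z₀ : ℤ)
    (hx₂ : x₂ = 2) (hy₂ : y₂ = 2 ∨ y₂ = -2) (hx₀ : x₀ = 2) (hz₀ : z₀ = 2 ∨ z₀ = -2)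
    (P Q : ℕ → ℤ)
    (hP0 : P 0 = x₂) (hP1 : 2 * P 1 = r * x₂ + a * y₂)
    (hPrec : ∀ i : ℕ, P (i + 2) = r * P (i + 1) - P i)
    (hQ0 : Q 0 = x₀) (hQ1 : 2 * Q 1 = s * x₀ + a * z₀)
    (hQrec : ∀ i : ℕ, Q (i + 2) = s * Q (i + 1) - Q i)
    (l m : ℕ) (hleven : Even l) (hmeven : Even m) (hl : 1 ≤ l) (hlm : l ≤ m)
    (heq : P l = Q m) :
    (l = 2 ∧ m = 2) ∨
      (m : ℝ) ≥ (1 / 4) * (-2 + Real.sqrt (4 + Real.sqrt (a : ℝ))) := by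
  subst hx₂ hx₀ hs
  exact (lower_bound_on_m_c1_minus_general ha ⟨k, by linarith⟩ hy₂ hz₀ hP0 hP1 hPrec hQ0 hQ1 hQrec
    hleven hmeven hl hlm heq).imp_right fun h ↦ quarter_mul_neg_two_add_sqrt_le (mod_cast h)
end

section
/- Let k ∈ {7, 8, 10, 11, 12, 13} and let a be a positive integer with k·a² + 4 = r² a perfect square. Set b = ka and let c be one of c₁⁺ = a + b + 2r, c₂⁺ = (ab+4)(a+b+2r) − 4r, c₂⁻ = (ab+4)(a+b−2r) + 4r; let s, t be the positive integers with ac + 4 = s² and bc + 4 = t². Consider a solution of Type 1, i.e. (x₂, y₂) = (2, ±2) and (x₀, z₀) = (2, ±2). If P_l = Q_m for even integers l, m with 1 ≤ m ≤ l, then either (l, m) = (2, 2) or l ≥ (1/12)·(−2 + √(4 + 3√a)). -/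
/-!
Modulo `a²`, the even-indexed terms are `P_{2n} ≡ 2 + a(bn² ± rn)` and
`Q_{2p} ≡ 2 + a(cp² ± sp)`. As `a ∣ b`, an equality `P_{2n} = Q_{2p}` gives
`±rn ≡ cp² ± sp (mod a)`, and `r² ≡ 4 (mod a)` removes `r`: the result is a congruence between
polynomials in `n` and `p` of degree at most four, which is an equality when `a` is large compared
with `n⁴`. It reads `±n = 2p² ± p` for `c₁⁺` and `(±n ± 4p²)² = p²` for `c₂⁺` and `c₂⁻`, so that
`n ≥ 3p` unless `n = p = 1`. On the other hand `P_i` grows like `r^i` and `Q_i` at most like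
`(2r²)^i`, which forces `n < 3p`.
-/

section Recurrence

variable {R : Type*} [CommRing R] {X : ℕ → R} {s : R}

theorem recurrence_even (hX : ∀ i, X (i + 2) = s * X (i + 1) - X i) (n : ℕ) :
    X (2 * (n + 2)) = (s ^ 2 - 2) * X (2 * (n + 1)) - X (2 * n) := by
  have h₂ : X (2 * (n + 1)) = s * X (2 * n + 1) - X (2 * n) := hX (2 * n)
  have h₃ : X (2 * n + 3) = s * X (2 * (n + 1)) - X (2 * n + 1) := hX (2 * n + 1)
  have h₄ : X (2 * (n + 2)) = s * X (2 * n + 3) - X (2 * (n + 1)) := hX (2 * n + 2)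
  linear_combination h₄ + s * h₃ + h₂

variable [LinearOrder R] [IsStrictOrderedRing R]

theorem recurrence_nonneg_and_le_succ (hX : ∀ i, X (i + 2) = s * X (i + 1) - X i) (hs : 2 ≤ s)
    (h0 : 0 ≤ X 0) (h01 : X 0 ≤ X 1) (n : ℕ) : 0 ≤ X n ∧ X n ≤ X (n + 1) := by
  induction n with
  | zero => exact ⟨h0, h01⟩
  | succ n ih =>
    have hpos : 0 ≤ X (n + 1) := ih.1.trans ih.2
    refine ⟨hpos, ?_⟩
    linarith [hX n, ih.2, mul_le_mul_of_nonneg_right hs hpos]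

theorem recurrence_monotone (hX : ∀ i, X (i + 2) = s * X (i + 1) - X i) (hs : 2 ≤ s)
    (h0 : 0 ≤ X 0) (h01 : X 0 ≤ X 1) : Monotone X :=
  monotone_nat_of_le_succ fun n => (recurrence_nonneg_and_le_succ hX hs h0 h01 n).2

theorem pow_mul_le_recurrence (hX : ∀ i, X (i + 2) = s * X (i + 1) - X i) (hs : 2 ≤ s)
    (h0 : 0 ≤ X 0) (h01 : X 0 ≤ X 1) (n : ℕ) : (s - 1) ^ n * X 1 ≤ X (n + 1) := by
  induction n with
  | zero => simp
  | succ n ih =>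
    calc (s - 1) ^ (n + 1) * X 1 = (s - 1) * ((s - 1) ^ n * X 1) := by ring
      _ ≤ (s - 1) * X (n + 1) := mul_le_mul_of_nonneg_left ih (by linarith)
      _ ≤ X (n + 2) := by linarith [hX n, (recurrence_nonneg_and_le_succ hX hs h0 h01 n).2]

theorem recurrence_le_pow_mul (hX : ∀ i, X (i + 2) = s * X (i + 1) - X i) (hs : 2 ≤ s)
    (h0 : 0 ≤ X 0) (h01 : X 0 ≤ X 1) (n : ℕ) : X (n + 1) ≤ s ^ n * X 1 := by
  induction n with
  | zero => simp
  | succ n ih =>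
    calc X (n + 2) ≤ s * X (n + 1) := by
          linarith [hX n, (recurrence_nonneg_and_le_succ hX hs h0 h01 n).1]
      _ ≤ s * (s ^ n * X 1) := mul_le_mul_of_nonneg_left ih (by linarith)
      _ = s ^ (n + 1) * X 1 := by ring

end Recurrence

/-- `X` is a sequence attached to a solution of Type 1, that is, to the initial pair `(2, 2ε)`
with the sign `ε` encoded as a unit of `ℤ`. The sequence `P` has `r` in the place of `s`. -/
structure IsTypeOneSeq (a s : ℤ) (ε : ℤˣ) (X : ℕ → ℤ) : Prop where
  zero : X 0 = 2
  one : X 1 = s + a * ε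
  recurrence : ∀ i, X (i + 2) = s * X (i + 1) - X i

theorem exists_isTypeOneSeq {a s x y : ℤ} {X : ℕ → ℤ} (hx : x = 2) (hy : y = 2 ∨ y = -2)
    (h0 : X 0 = x) (h1 : 2 * X 1 = s * x + a * y)
    (hX : ∀ i, X (i + 2) = s * X (i + 1) - X i) : ∃ ε, IsTypeOneSeq a s ε X := by
  subst hx
  rcases hy with rfl | rfl
  · exact ⟨1, h0, by push_cast; linarith, hX⟩
  · exact ⟨-1, h0, by push_cast; linarith, hX⟩

namespace IsTypeOneSeq

variable {a b c r s : ℤ} {ε δ : ℤˣ} {P Q X : ℕ → ℤ} {n p : ℕ}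

theorem even_modEq (hX : IsTypeOneSeq a s ε X) (hs : a * c + 4 = s ^ 2) (n : ℕ) :
    X (2 * n) ≡ 2 + a * (c * n ^ 2 + ε * s * n) [ZMOD a ^ 2] := by
  induction n using Nat.twoStepInduction with
  | zero => simp [hX.zero]
  | one =>
    have h₂ : X 2 = 2 + a * (c + ε * s) := by
      linear_combination hX.recurrence 0 + s * hX.one - hX.zero - hs
    simp [h₂]
  | more n ih₀ ih₁ =>
    rw [recurrence_even hX.recurrence, ← hs]
    refine ((ih₁.mul_left _).sub ih₀).trans (Int.modEq_iff_dvd.mpr ?_)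
    refine ⟨-c * (c * (n + 1) ^ 2 + ε * s * (n + 1)), ?_⟩
    push_cast
    ring

theorem modEq_of_even_eq (ha : a ≠ 0) (hP : IsTypeOneSeq a r ε P) (hQ : IsTypeOneSeq a s δ Q)
    (hr : a * b + 4 = r ^ 2) (hs : a * c + 4 = s ^ 2) (h : P (2 * n) = Q (2 * p)) :
    b * n ^ 2 + ε * r * n ≡ c * p ^ 2 + δ * s * p [ZMOD a] := by
  have hmod := (hP.even_modEq hr n).symm.trans (h ▸ hQ.even_modEq hs p)
  rw [sq a] at hmod
  exact (hmod.add_left_cancel' 2).mul_left_cancel' ha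

theorem one_bounds (hX : IsTypeOneSeq a s ε X) (ha : 0 ≤ a) : s - a ≤ X 1 ∧ X 1 ≤ s + a := by
  rw [hX.one]
  rcases Int.units_eq_one_or ε with rfl | rfl <;> push_cast <;> constructor <;> linarith

theorem lt_three_mul_of_even_eq (hP : IsTypeOneSeq a r ε P) (hQ : IsTypeOneSeq a s δ Q)
    (ha : 0 ≤ a) (hr : 66 ≤ r) (har : a + 2 ≤ r) (has : a + 2 ≤ s) (hsr : s + a ≤ 2 * r ^ 2)
    (hp : 1 ≤ p) (h : P (2 * n) = Q (2 * p)) : n < 3 * p := by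
  by_contra! hpn
  have hP1 : 2 ≤ P 1 := by linarith [(hP.one_bounds ha).1]
  have hQ1 : 2 ≤ Q 1 := by linarith [(hQ.one_bounds ha).1]
  have hlower : (r - 1) ^ (5 * p) ≤ P (2 * n) := calc
    (r - 1) ^ (5 * p) ≤ (r - 1) ^ (5 * p) * P 1 :=
      le_mul_of_one_le_right (pow_nonneg (by linarith) _) (by linarith)
    _ ≤ P (5 * p + 1) := pow_mul_le_recurrence hP.recurrence (by linarith)
      (by simp [hP.zero]) (by rwa [hP.zero]) _
    _ ≤ P (2 * n) := recurrence_monotone hP.recurrence (by linarith)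
      (by simp [hP.zero]) (by rwa [hP.zero]) (by omega)
  have hupper : Q (2 * p) ≤ (2 * r ^ 2) ^ (2 * p) := by
    obtain ⟨j, hj⟩ : ∃ j, 2 * p = j + 1 := ⟨2 * p - 1, by omega⟩
    rw [hj]
    calc Q (j + 1) ≤ s ^ j * Q 1 := recurrence_le_pow_mul hQ.recurrence (by linarith)
          (by simp [hQ.zero]) (by rwa [hQ.zero]) j
      _ ≤ (2 * r ^ 2) ^ j * (2 * r ^ 2) := by
          gcongr <;> linarith [(hQ.one_bounds ha).2]
      _ = (2 * r ^ 2) ^ (j + 1) := by ring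
  have hbase : (2 * r ^ 2) ^ 2 < (r - 1) ^ 5 := calc
    (2 * r ^ 2) ^ 2 = 4 * r ^ 4 := by ring
    _ ≤ 4 * (2 * (r - 1)) ^ 4 := by gcongr; linarith
    _ = 64 * (r - 1) ^ 4 := by ring
    _ < (r - 1) * (r - 1) ^ 4 :=
      mul_lt_mul_of_pos_right (by linarith) (pow_pos (by linarith) 4)
    _ = (r - 1) ^ 5 := by ring
  have hpow : (2 * r ^ 2) ^ (2 * p) < (r - 1) ^ (5 * p) := by
    rw [pow_mul, pow_mul]
    exact pow_lt_pow_left₀ hbase (by positivity) (by omega)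
  linarith

end IsTypeOneSeq

section Congruences

variable {a r n p : ℤ} {d ε δ : ℤˣ}

theorem four_mul_modEq_of_sq_modEq_four (hr : r ^ 2 ≡ 4 [ZMOD a])
    (h : ε * r * n ≡ 2 * r * p ^ 2 + δ * r * p [ZMOD a]) :
    4 * (ε * n) ≡ 4 * (2 * p ^ 2 + δ * p) [ZMOD a] := calc
  4 * (ε * n) ≡ r ^ 2 * (ε * n) [ZMOD a] := hr.symm.mul_right _
  _ = r * (ε * r * n) := by ring
  _ ≡ r * (2 * r * p ^ 2 + δ * r * p) [ZMOD a] := h.mul_left r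
  _ = r ^ 2 * (2 * p ^ 2 + δ * p) := by ring
  _ ≡ 4 * (2 * p ^ 2 + δ * p) [ZMOD a] := hr.mul_right _

theorem eq_of_four_mul_modEq (hp : 1 ≤ p) (hpn : p ≤ n) (ha : 16 * n ^ 2 < a)
    (h : 4 * (ε * n) ≡ 4 * (2 * p ^ 2 + δ * p) [ZMOD a]) : ε * n = 2 * p ^ 2 + δ * p := by
  have hsmall : |4 * (2 * p ^ 2 + δ * p) - 4 * (ε * n)| < a := by
    refine lt_of_le_of_lt (abs_le.mpr ?_) ha
    rcases Int.units_eq_one_or ε with rfl | rfl <;>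
      rcases Int.units_eq_one_or δ with rfl | rfl <;> push_cast <;> constructor <;> nlinarith
  linarith [Int.eq_zero_of_abs_lt_dvd h.dvd hsmall]

theorem eq_one_or_three_mul_le_of_mul_eq (hp : 1 ≤ p) (hn : 0 ≤ n) (h : ε * n = 2 * p ^ 2 + δ * p) :
    (n = 1 ∧ p = 1) ∨ 3 * p ≤ n := by
  obtain rfl | hp2 : p = 1 ∨ 2 ≤ p := by omega
  · rcases Int.units_eq_one_or ε with rfl | rfl <;>
      rcases Int.units_eq_one_or δ with rfl | rfl <;> push_cast at h <;> omega
  · right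
    rcases Int.units_eq_one_or ε with rfl | rfl <;>
      rcases Int.units_eq_one_or δ with rfl | rfl <;> push_cast at h <;> nlinarith

theorem sixteen_mul_sq_modEq_of_sq_modEq_four (hr : r ^ 2 ≡ 4 [ZMOD a])
    (h : ε * r * n ≡ 4 * d * r * p ^ 2 + 2 * δ * p [ZMOD a]) :
    16 * (ε * n - 4 * d * p ^ 2) ^ 2 ≡ 16 * p ^ 2 [ZMOD a] := by
  have hlin : 4 * (ε * n - 4 * d * p ^ 2) ≡ 2 * δ * r * p [ZMOD a] := calc
    4 * (ε * n - 4 * d * p ^ 2) ≡ r ^ 2 * (ε * n - 4 * d * p ^ 2) [ZMOD a] := hr.symm.mul_right _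
    _ = r * (ε * r * n - 4 * d * r * p ^ 2) := by ring
    _ ≡ r * (4 * d * r * p ^ 2 + 2 * δ * p - 4 * d * r * p ^ 2) [ZMOD a] :=
      (h.sub_right _).mul_left r
    _ = 2 * δ * r * p := by ring
  calc 16 * (ε * n - 4 * d * p ^ 2) ^ 2 = (4 * (ε * n - 4 * d * p ^ 2)) ^ 2 := by ring
    _ ≡ (2 * δ * r * p) ^ 2 [ZMOD a] := hlin.pow 2
    _ = r ^ 2 * (4 * p ^ 2) := by
      linear_combination 4 * r ^ 2 * p ^ 2 * Int.units_coe_mul_self δ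
    _ ≡ 4 * (4 * p ^ 2) [ZMOD a] := hr.mul_right _
    _ = 16 * p ^ 2 := by ring

theorem sq_eq_sq_of_sixteen_mul_sq_modEq (hp : 1 ≤ p) (hpn : p ≤ n) (ha : 400 * n ^ 4 < a)
    (h : 16 * (ε * n - 4 * d * p ^ 2) ^ 2 ≡ 16 * p ^ 2 [ZMOD a]) :
    (ε * n - 4 * d * p ^ 2) ^ 2 = p ^ 2 := by
  have hleft_abs : |ε * n - 4 * d * p ^ 2| ≤ 5 * n ^ 2 := by
    rw [abs_le]
    rcases Int.units_eq_one_or ε with rfl | rfl <;>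
      rcases Int.units_eq_one_or d with rfl | rfl <;> push_cast <;> constructor <;> nlinarith
  have hleft : (ε * n - 4 * d * p ^ 2) ^ 2 ≤ 25 * n ^ 4 := calc
    (ε * n - 4 * d * p ^ 2) ^ 2 ≤ (5 * n ^ 2) ^ 2 := sq_le_sq.mpr (hleft_abs.trans (le_abs_self _))
    _ = 25 * n ^ 4 := by ring
  have hright : p ^ 2 ≤ 25 * n ^ 4 := calc
    p ^ 2 ≤ n ^ 2 := by gcongr
    _ ≤ n ^ 4 := pow_le_pow_right₀ (by linarith) (by norm_num)
    _ ≤ 25 * n ^ 4 := le_mul_of_one_le_left (by positivity) (by norm_num)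
  have hsmall : |16 * p ^ 2 - 16 * (ε * n - 4 * d * p ^ 2) ^ 2| < a := by
    refine lt_of_le_of_lt (abs_le.mpr ⟨?_, ?_⟩) ha <;>
      linarith [sq_nonneg (ε * n - 4 * d * p ^ 2), sq_nonneg p]
  linarith [Int.eq_zero_of_abs_lt_dvd h.dvd hsmall]

theorem three_mul_le_of_sq_eq_sq (hp : 1 ≤ p) (hn : 0 ≤ n)
    (h : (ε * n - 4 * d * p ^ 2) ^ 2 = p ^ 2) : 3 * p ≤ n := by
  rcases sq_eq_sq_iff_eq_or_eq_neg.mp h with h | h <;>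
    rcases Int.units_eq_one_or ε with rfl | rfl <;>
    rcases Int.units_eq_one_or d with rfl | rfl <;> push_cast at h <;> nlinarith

end Congruences

section ThirdElement

variable {a b c r s : ℤ}

theorem add_two_le_of_mul_add_four_eq_sq (ha : 0 < a) (hb : 0 < b) (hab : a ∣ b) (hr : 0 < r)
    (hr2 : a * b + 4 = r ^ 2) : a + 2 ≤ r := by
  obtain ⟨k, rfl⟩ := hab
  have hk : 0 < k := pos_of_mul_pos_right hb ha.le
  have hka : a ≤ a * k := le_mul_of_one_le_right ha.le hk
  have har : a < r := lt_of_pow_lt_pow_left₀ 2 hr.le (by nlinarith)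
  by_contra! hlt
  obtain rfl : r = a + 1 := by omega
  obtain rfl | hk2 : k = 1 ∨ 2 ≤ k := by omega
  · have : 2 * a = 3 := by linarith
    omega
  · nlinarith [sq_nonneg (a - 1)]

/-- `c` is one of `c₁⁺`, `c₂⁺`, `c₂⁻`, the third elements considered for the pair `{a, b}`, where
`r` is the square root of `ab + 4`. -/
def IsThirdElement (a b r c : ℤ) : Prop :=
  c = a + b + 2 * r ∨ c = (a * b + 4) * (a + b + 2 * r) - 4 * r ∨
    c = (a * b + 4) * (a + b - 2 * r) + 4 * r

theorem eq_add_of_mul_add_four_eq_sq (hr : 0 ≤ r + a) (hs : 0 ≤ s) (hr2 : a * b + 4 = r ^ 2)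
    (hs2 : a * (a + b + 2 * r) + 4 = s ^ 2) : s = r + a :=
  (pow_left_inj₀ hs hr two_ne_zero).mp (by linear_combination hr2 - hs2)

theorem eq_mul_sub_two_of_mul_add_four_eq_sq {d : ℤˣ} (hr : 2 ≤ r * (r + d * a)) (hs : 0 ≤ s)
    (hr2 : a * b + 4 = r ^ 2)
    (hs2 : a * ((a * b + 4) * (a + b + 2 * d * r) - 4 * d * r) + 4 = s ^ 2) :
    s = r * (r + d * a) - 2 := by
  refine (pow_left_inj₀ hs (by linarith) two_ne_zero).mp ?_
  rw [hr2] at hs2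
  linear_combination r ^ 2 * hr2 - hs2 - r ^ 2 * a ^ 2 * Int.units_coe_mul_self d

theorem IsThirdElement.eq_and_eq (hc : IsThirdElement a b r c) (ha : 0 ≤ a) (har : a + 2 ≤ r)
    (hr2 : a * b + 4 = r ^ 2) (hs : 0 ≤ s) (hs2 : a * c + 4 = s ^ 2) :
    (c = a + b + 2 * r ∧ s = r + a) ∨
      ∃ d : ℤˣ, c = (a * b + 4) * (a + b + 2 * d * r) - 4 * d * r ∧ s = r * (r + d * a) - 2 := by
  have second (d : ℤˣ) (hd : c = (a * b + 4) * (a + b + 2 * d * r) - 4 * d * r) :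
      s = r * (r + d * a) - 2 := by
    refine eq_mul_sub_two_of_mul_add_four_eq_sq ?_ hs hr2 (hd ▸ hs2)
    rcases Int.units_eq_one_or d with rfl | rfl <;> push_cast <;> nlinarith
  rcases hc with hc | hc | hc
  · exact Or.inl ⟨hc, eq_add_of_mul_add_four_eq_sq (by linarith) hs hr2 (hc ▸ hs2)⟩
  · have hd : c = (a * b + 4) * (a + b + 2 * (1 : ℤˣ) * r) - 4 * (1 : ℤˣ) * r := by
      rw [hc]; push_cast; ring
    exact Or.inr ⟨1, hd, second 1 hd⟩
  · have hd : c = (a * b + 4) * (a + b + 2 * (-1 : ℤˣ) * r) - 4 * (-1 : ℤˣ) * r := by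
      rw [hc]; push_cast; ring
    exact Or.inr ⟨-1, hd, second (-1) hd⟩

theorem first_third_element_modEq (hab : a ∣ b) : a + b + 2 * r ≡ 2 * r [ZMOD a] := by
  obtain ⟨k, rfl⟩ := hab
  exact Int.modEq_iff_dvd.mpr ⟨-(1 + k), by ring⟩

theorem second_third_element_modEq {d : ℤ} (hab : a ∣ b) :
    (a * b + 4) * (a + b + 2 * d * r) - 4 * d * r ≡ 4 * d * r [ZMOD a] := by
  obtain ⟨k, rfl⟩ := hab
  exact Int.modEq_iff_dvd.mpr ⟨-(a * k * (a + a * k + 2 * d * r) + 4 * (1 + k)), by ring⟩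

theorem add_two_le_and_add_le_two_mul_sq (ha : 0 ≤ a) (har : a + 2 ≤ r)
    (hs : s = r + a ∨ ∃ d : ℤˣ, s = r * (r + d * a) - 2) : a + 2 ≤ s ∧ s + a ≤ 2 * r ^ 2 := by
  rcases hs with rfl | ⟨d, rfl⟩
  · constructor <;> nlinarith
  · rcases Int.units_eq_one_or d with rfl | rfl <;> push_cast <;> constructor <;> nlinarith

theorem IsThirdElement.bounds (hc : IsThirdElement a b r c) (ha : 0 ≤ a) (har : a + 2 ≤ r)
    (hr2 : a * b + 4 = r ^ 2) (hs : 0 ≤ s) (hs2 : a * c + 4 = s ^ 2) :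
    a + 2 ≤ s ∧ s + a ≤ 2 * r ^ 2 :=
  add_two_le_and_add_le_two_mul_sq ha har <|
    (hc.eq_and_eq ha har hr2 hs hs2).imp And.right fun ⟨d, hd⟩ => ⟨d, hd.2⟩

theorem IsThirdElement.eq_one_or_three_mul_le {n p : ℤ} {ε δ : ℤˣ} (hc : IsThirdElement a b r c)
    (har : a + 2 ≤ r) (hab : a ∣ b) (hr2 : a * b + 4 = r ^ 2) (hs : 0 ≤ s)
    (hs2 : a * c + 4 = s ^ 2) (hp : 1 ≤ p) (hpn : p ≤ n) (hna : 400 * n ^ 4 < a)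
    (h : b * n ^ 2 + ε * r * n ≡ c * p ^ 2 + δ * s * p [ZMOD a]) :
    (n = 1 ∧ p = 1) ∨ 3 * p ≤ n := by
  have hn : 1 ≤ n := hp.trans hpn
  have ha : 0 ≤ a := le_trans (by positivity) hna.le
  have hr4 : r ^ 2 ≡ 4 [ZMOD a] := Int.modEq_iff_dvd.mpr ⟨-b, by linear_combination hr2⟩
  have hrn : ε * r * n ≡ c * p ^ 2 + δ * s * p [ZMOD a] := by
    simpa using ((hab.zero_modEq_int.mul_right (n ^ 2)).add_right _).trans h
  rcases hc.eq_and_eq ha har hr2 hs hs2 with ⟨rfl, rfl⟩ | ⟨d, rfl, rfl⟩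
  · have hcr : a + b + 2 * r ≡ 2 * r [ZMOD a] := first_third_element_modEq hab
    have hsr : r + a ≡ r [ZMOD a] := by simp
    have hna' : 16 * n ^ 2 < a := by
      linarith [pow_le_pow_right₀ hn (show 2 ≤ 4 by norm_num), pow_nonneg (zero_le_one.trans hn) 4]
    exact eq_one_or_three_mul_le_of_mul_eq hp (by linarith) <| eq_of_four_mul_modEq hp hpn hna' <|
      four_mul_modEq_of_sq_modEq_four hr4 <|
        hrn.trans ((hcr.mul_right _).add ((hsr.mul_left _).mul_right _))
  · have hcr := second_third_element_modEq (r := r) (d := d) hab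
    have hs2r : r * (r + d * a) - 2 ≡ 2 [ZMOD a] :=
      Int.modEq_iff_dvd.mpr ⟨-(b + r * d), by linear_combination hr2⟩
    have hmod : ε * r * n ≡ 4 * d * r * p ^ 2 + 2 * δ * p [ZMOD a] := by
      rw [mul_comm 2 (δ : ℤ)]
      exact hrn.trans ((hcr.mul_right _).add ((hs2r.mul_left _).mul_right _))
    exact Or.inr <| three_mul_le_of_sq_eq_sq hp (by linarith) <|
      sq_eq_sq_of_sixteen_mul_sq_modEq hp hpn hna (sixteen_mul_sq_modEq_of_sq_modEq_four hr4 hmod)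

end ThirdElement

theorem sq_lt_of_lt_sqrt_add_sqrt {x a : ℝ} (hx : 0 ≤ x)
    (h : x < 1 / 12 * (-2 + √(4 + 3 * √a))) : (48 * x ^ 2) ^ 2 < a := by
  have houter : (12 * x + 2) ^ 2 < 4 + 3 * √a :=
    (Real.lt_sqrt (by positivity)).mp (by linarith)
  exact (Real.lt_sqrt (by positivity)).mp (by linarith)

theorem lower_bound_on_l_c1_plus_c2_general {a b r c s : ℤ} {ε δ : ℤˣ} {P Q : ℕ → ℤ} {l m : ℕ}
    (ha : 0 < a) (hb : 0 < b) (hab : a ∣ b) (hr : 0 < r) (hr2 : a * b + 4 = r ^ 2)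
    (hc : IsThirdElement a b r c) (hs : 0 < s) (hs2 : a * c + 4 = s ^ 2)
    (hP : IsTypeOneSeq a r ε P) (hQ : IsTypeOneSeq a s δ Q)
    (hl : Even l) (hm : Even m) (hm1 : 1 ≤ m) (hml : m ≤ l) (heq : P l = Q m) :
    (l = 2 ∧ m = 2) ∨ (l : ℝ) ≥ 1 / 12 * (-2 + √(4 + 3 * √(a : ℝ))) := by
  obtain ⟨n, rfl⟩ := even_iff_exists_two_mul.mp hl
  obtain ⟨p, rfl⟩ := even_iff_exists_two_mul.mp hm
  have hp : (1 : ℤ) ≤ p := by omega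
  have hpn : (p : ℤ) ≤ n := by omega
  refine or_iff_not_imp_right.mpr fun hlt => ?_
  have hna : (192 * (n : ℤ) ^ 2) ^ 2 < a := by
    have := sq_lt_of_lt_sqrt_add_sqrt (Nat.cast_nonneg _) (not_le.mp hlt)
    exact_mod_cast (by push_cast at this; linarith : (192 * (n : ℝ) ^ 2) ^ 2 < a)
  have hn4 : (1 : ℤ) ≤ n ^ 4 := one_le_pow₀ (hp.trans hpn)
  have har := add_two_le_of_mul_add_four_eq_sq ha hb hab hr hr2
  obtain ⟨has, hsr⟩ := hc.bounds ha.le har hr2 hs.le hs2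
  have hlt3 : n < 3 * p :=
    hP.lt_three_mul_of_even_eq hQ ha.le (by linarith) har has hsr (by omega) heq
  have hmod := hP.modEq_of_even_eq ha.ne' hQ hr2 hs2 heq
  rcases hc.eq_one_or_three_mul_le har hab hr2 hs.le hs2 hp hpn (by linarith) hmod with h | h <;>
    omega

/-- For `k ∈ {7,8,10,11,12,13}`, `b = ka` and `c ∈ {c₁⁺, c₂⁺, c₂⁻}`, with a solution of
Type 1: if `P_l = Q_m` for even `l, m` with `1 ≤ m ≤ l`, then `(l, m) = (2, 2)` or
`l ≥ (1/12)·(−2 + √(4 + 3√a))`. -/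
theorem lower_bound_on_l_c1_plus_c2
    (k a r b c s t : ℤ)
    (hk : k ∈ ({7, 8, 10, 11, 12, 13} : Set ℤ)) (ha : 0 < a) (hr : 0 < r)
    (hr2 : k * a ^ 2 + 4 = r ^ 2) (hb : b = k * a)
    (hc : c = a + b + 2 * r ∨ c = (a * b + 4) * (a + b + 2 * r) - 4 * r ∨
          c = (a * b + 4) * (a + b - 2 * r) + 4 * r)
    (hs : 0 < s) (hs2 : a * c + 4 = s ^ 2) (ht : 0 < t) (ht2 : b * c + 4 = t ^ 2)
    (x₂ y₂ x₀ z₀ : ℤ)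
    (hx₂ : x₂ = 2) (hy₂ : y₂ = 2 ∨ y₂ = -2) (hx₀ : x₀ = 2) (hz₀ : z₀ = 2 ∨ z₀ = -2)
    (P Q : ℕ → ℤ)
    (hP0 : P 0 = x₂) (hP1 : 2 * P 1 = r * x₂ + a * y₂)
    (hPrec : ∀ i : ℕ, P (i + 2) = r * P (i + 1) - P i)
    (hQ0 : Q 0 = x₀) (hQ1 : 2 * Q 1 = s * x₀ + a * z₀)
    (hQrec : ∀ i : ℕ, Q (i + 2) = s * Q (i + 1) - Q i)
    (l m : ℕ) (hleven : Even l) (hmeven : Even m) (hm : 1 ≤ m) (hml : m ≤ l)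
    (heq : P l = Q m) :
    (l = 2 ∧ m = 2) ∨
      (l : ℝ) ≥ (1 / 12) * (-2 + Real.sqrt (4 + 3 * Real.sqrt (a : ℝ))) := by
  obtain ⟨ε, hP⟩ := exists_isTypeOneSeq hx₂ hy₂ hP0 hP1 hPrec
  obtain ⟨δ, hQ⟩ := exists_isTypeOneSeq hx₀ hz₀ hQ0 hQ1 hQrec
  have hk0 : 0 < k := by rcases hk with rfl | rfl | rfl | rfl | rfl | rfl <;> norm_num
  exact lower_bound_on_l_c1_plus_c2_general ha (hb ▸ mul_pos hk0 ha) ⟨k, by rw [hb, mul_comm]⟩ hr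
    (by rw [hb]; linarith) hc hs hs2 hP hQ hleven hmeven hm hml heq
end

section
/- Let k ∈ {7, 8, 10, 11, 12, 13} and let a be a positive integer with k·a² + 4 = r² a perfect square. Set b = ka and let c be one of c₂⁺ = (ab+4)(a+b+2r) − 4r, c₂⁻ = (ab+4)(a+b−2r) + 4r; let s, t be the positive integers with ac + 4 = s² and bc + 4 = t². Consider a solution of Type 2, i.e. (x₂, y₂) = (2, ±2) and (x₀, z₀) = (r, ±t). If P_l = Q_m for some integers l and odd m with m ≥ 3, then m > C_k·a, where C₇ = (14 − 5√7.1)/4, C₈ = (6√8 − 16)/4, C₁₀ = (20 − 6√10.1)/4, C₁₁ = (7√11 − 22)/4, C₁₂ = (7√12 − 24)/4, C₁₃ = (26 − 7√13.1)/4. -/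
/-!
Everything happens modulo `r`, where `a * b = -4`. There the recurrence of `P` reads
`P (i + 2) = -P i`, so `P l` is `±2` or `±a`. Since `s` and `t` are, up to sign,
`r ^ 2 ± a * r - 2` and `r ^ 2 ± b * r - 2`, the recurrence of `Q` has the double characteristic
root `±1`, and `Q m` is `±m * a`. Multiplying `P l = Q m` by `b` gives `4 * m ≡ ±4` or
`4 * m ≡ ±2 * b` modulo `r`. For `a ≥ 7` we have `√k * a < r < √(k + 1 / 10) * a`, so that
`2 * b = 2 * k * a` is more than `4 * C_k * a` away from every multiple of `r`. Hence
`m > C_k * a` in the second case; in the first case even `6 * m ≥ r > 8 * C_k * a`. For `a ≤ 6`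
the bound is trivial because `C_k < 1 / 3`.
-/

/-- The sequences `(P_l)` and `(Q_m)` attached to a D(4)-triple: `IsPellSeq r a x₂ y₂ P` and
`IsPellSeq s a x₀ z₀ Q`. The second term is given through its double, so that all terms are
integers. -/
structure IsPellSeq (σ a x y : ℤ) (V : ℕ → ℤ) : Prop where
  zero : V 0 = x
  two_mul_one : 2 * V 1 = σ * x + a * y
  add_two : ∀ i, V (i + 2) = σ * V (i + 1) - V i

section Congruences

variable {R : Type*} [CommRing R]

lemma eq_or_eq_neg_of_antiperiodic_two {f : ℕ → R} (hf : Function.Antiperiodic f 2) (l : ℕ) :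
    (f l = f 0 ∨ f l = -f 0) ∨ (f l = f 1 ∨ f l = -f 1) := by
  have shift (j i : ℕ) : f (j + i * 2) = f j ∨ f (j + i * 2) = -f j := by
    rw [← smul_eq_mul, hf.add_nsmul_eq i]
    rcases neg_one_pow_eq_or ℤ i with h | h <;> simp [h]
  rw [← Nat.mod_add_div' l 2]
  rcases Nat.mod_two_eq_zero_or_one l with h | h <;> rw [h]
  · exact Or.inl (shift 0 _)
  · exact Or.inr (shift 1 _)

lemma eq_pow_mul_of_double_root {f : ℕ → R} {ε : R} (hε : ε * ε = 1)
    (hf : ∀ i, f (i + 2) = 2 * ε * f (i + 1) - f i) (i : ℕ) :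
    f i = ε ^ i * (f 0 + i * (ε * f 1 - f 0)) := by
  induction i using Nat.twoStepInduction with
  | zero => simp
  | one => linear_combination -f 1 * hε
  | more i ih₀ ih₁ =>
    rw [hf, ih₀, ih₁]
    push_cast
    linear_combination ε ^ i * (f 0 + i * (ε * f 1 - f 0)) * hε

lemma mul_add_four_eq_sq {a b c ρ : R} (hρ : a * b + 4 = ρ ^ 2)
    (hc : c = (a * b + 4) * (a + b + 2 * ρ) - 4 * ρ) :
    a * c + 4 = (ρ ^ 2 + a * ρ - 2) ^ 2 := by
  rw [hc, hρ]
  linear_combination ρ ^ 2 * hρ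

lemma four_mul_eq_of_eq_mul {a b x n : R} (hab : a * b = -4)
    (hx : (x = 2 ∨ x = -2) ∨ (x = a ∨ x = -a)) (hxn : x = n * a ∨ x = -(n * a)) :
    (4 * n = 4 ∨ 4 * n = -4) ∨ (4 * n = 2 * b ∨ 4 * n = -(2 * b)) := by
  have mul_b : n * a * b = -(4 * n) := by linear_combination n * hab
  grind

variable {a b c r s t : ℤ}

lemma exists_signed_root (hr2 : a * b + 4 = r ^ 2)
    (hc : c = (a * b + 4) * (a + b + 2 * r) - 4 * r ∨
          c = (a * b + 4) * (a + b - 2 * r) + 4 * r)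
    (hs2 : a * c + 4 = s ^ 2) (ht2 : b * c + 4 = t ^ 2) :
    ∃ ρ : ℤ, (r = ρ ∨ r = -ρ) ∧ a * b + 4 = ρ ^ 2 ∧
      (s = ρ ^ 2 + a * ρ - 2 ∨ s = -(ρ ^ 2 + a * ρ - 2)) ∧
      (t = ρ ^ 2 + b * ρ - 2 ∨ t = -(ρ ^ 2 + b * ρ - 2)) := by
  -- The sign of `ρ = ±r` distinguishes `c₂⁺` from `c₂⁻`.
  obtain ⟨ρ, hρ, hcρ⟩ : ∃ ρ : ℤ, (r = ρ ∨ r = -ρ) ∧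
      c = (a * b + 4) * (a + b + 2 * ρ) - 4 * ρ := by
    rcases hc with h | h
    · exact ⟨r, Or.inl rfl, h⟩
    · exact ⟨-r, Or.inr (neg_neg r).symm, by linear_combination h⟩
  have hρ2 : a * b + 4 = ρ ^ 2 := by rw [hr2, sq_eq_sq_iff_eq_or_eq_neg.2 hρ]
  refine ⟨ρ, hρ, hρ2, sq_eq_sq_iff_eq_or_eq_neg.1 ?_, sq_eq_sq_iff_eq_or_eq_neg.1 ?_⟩
  · rw [← hs2, mul_add_four_eq_sq hρ2 hcρ]
  · rw [← ht2, mul_add_four_eq_sq (b := a) (ρ := ρ) (by linear_combination hρ2)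
      (by linear_combination hcρ)]

namespace IsPellSeq

variable {y z : ℤ} {P Q : ℕ → ℤ}

lemma cast_eq_two_or_eq_left (hP : IsPellSeq r a 2 y P) (hy : y = 2 ∨ y = -2)
    (hr : (r : R) = 0) (l : ℕ) :
    ((P l : R) = 2 ∨ (P l : R) = -2) ∨ ((P l : R) = a ∨ (P l : R) = -a) := by
  have antiperiodic : Function.Antiperiodic (fun i ↦ (P i : R)) 2 := fun i ↦ by
    simp [hP.add_two, hr]
  have one_eq : (P 1 : R) = a ∨ (P 1 : R) = -a := by
    have := hP.two_mul_one
    rcases hy with rfl | rfl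
    · left
      rw [show P 1 = r + a by linarith, Int.cast_add, hr, zero_add]
    · right
      rw [show P 1 = r - a by linarith, Int.cast_sub, hr, zero_sub]
  have := eq_or_eq_neg_of_antiperiodic_two antiperiodic l
  simp only [hP.zero, Int.cast_ofNat] at this
  grind

lemma cast_one_eq_or_eq_neg {ρ : ℤ} (hQ : IsPellSeq s a r z Q) (hρ2 : a * b + 4 = ρ ^ 2)
    (hrρ : r = ρ ∨ r = -ρ) (hs : s = ρ ^ 2 + a * ρ - 2 ∨ s = -(ρ ^ 2 + a * ρ - 2))
    (hz : z = ρ ^ 2 + b * ρ - 2 ∨ z = -(ρ ^ 2 + b * ρ - 2)) (hρ : (ρ : R) = 0) :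
    (Q 1 : R) = a ∨ (Q 1 : R) = -a := by
  have hsr : s * r = ρ * (ρ ^ 2 + a * ρ - 2) ∨ s * r = -(ρ * (ρ ^ 2 + a * ρ - 2)) := by grind
  have haz : a * z = a * ρ ^ 2 + ρ * (ρ ^ 2 - 4) - 2 * a ∨
      a * z = -(a * ρ ^ 2 + ρ * (ρ ^ 2 - 4) - 2 * a) := by grind
  -- The factor 2 has to be cancelled in `ℤ`, since it may be a zero divisor in `R`.
  have hQ1 := hQ.two_mul_one
  have hQ1' : (Q 1 = ρ ^ 3 + a * ρ ^ 2 - 3 * ρ - a ∨ Q 1 = -(ρ ^ 3 + a * ρ ^ 2 - 3 * ρ - a)) ∨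
      (Q 1 = ρ + a ∨ Q 1 = -(ρ + a)) := by grind
  rcases hQ1' with (h | h) | (h | h) <;> simp [h, hρ]

lemma cast_eq_mul_or_eq_neg_mul (hQ : IsPellSeq s a r z Q) (hr2 : a * b + 4 = r ^ 2)
    (hc : c = (a * b + 4) * (a + b + 2 * r) - 4 * r ∨
          c = (a * b + 4) * (a + b - 2 * r) + 4 * r)
    (hs2 : a * c + 4 = s ^ 2) (ht2 : b * c + 4 = t ^ 2) (hz : z = t ∨ z = -t)
    (hr : (r : R) = 0) (m : ℕ) :
    (Q m : R) = m * a ∨ (Q m : R) = -(m * a) := by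
  obtain ⟨ρ, hrρ, hρ2, hs, ht⟩ := exists_signed_root hr2 hc hs2 ht2
  have hρ : (ρ : R) = 0 := by rcases hrρ with rfl | rfl <;> simpa using hr
  have one_eq := hQ.cast_one_eq_or_eq_neg hρ2 hrρ hs (by grind) hρ
  obtain ⟨ε, hε, hsε⟩ : ∃ ε : R, (ε = 1 ∨ ε = -1) ∧ (s : R) = 2 * ε := by
    rcases hs with rfl | rfl
    · exact ⟨-1, Or.inr rfl, by simp [hρ]⟩
    · exact ⟨1, Or.inl rfl, by simp [hρ]⟩
  have formula := eq_pow_mul_of_double_root (f := fun i ↦ (Q i : R)) (ε := ε) (by grind)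
    (fun i ↦ by simp [hQ.add_two, hsε]) m
  have sign : ε ^ m = 1 ∨ ε ^ m = -1 := by
    rcases hε with rfl | rfl
    · exact Or.inl (one_pow m)
    · exact neg_one_pow_eq_or R m
  simp only [hQ.zero, hr] at formula
  grind

lemma dvd_four_mul_of_eq (hP : IsPellSeq r a 2 y P) (hQ : IsPellSeq s a r z Q)
    (hr2 : a * b + 4 = r ^ 2)
    (hc : c = (a * b + 4) * (a + b + 2 * r) - 4 * r ∨
          c = (a * b + 4) * (a + b - 2 * r) + 4 * r)
    (hs2 : a * c + 4 = s ^ 2) (ht2 : b * c + 4 = t ^ 2) (hy : y = 2 ∨ y = -2)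
    (hz : z = t ∨ z = -t) {l m : ℕ} (heq : P l = Q m) :
    (r ∣ 4 * m - 4 ∨ r ∣ 4 * m + 4) ∨ (r ∣ 2 * b - 4 * m ∨ r ∣ 2 * b + 4 * m) := by
  have cast_eq_zero_iff (n : ℤ) : (n : ZMod r.natAbs) = 0 ↔ r ∣ n := by
    rw [ZMod.intCast_zmod_eq_zero_iff_dvd, Int.natAbs_dvd]
  have hr : (r : ZMod r.natAbs) = 0 := (cast_eq_zero_iff r).2 dvd_rfl
  have hab : (a : ZMod r.natAbs) * b = -4 := by
    have := congrArg (Int.cast : ℤ → ZMod r.natAbs) hr2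
    push_cast at this
    linear_combination this + (r : ZMod r.natAbs) * hr
  have key := four_mul_eq_of_eq_mul hab (hP.cast_eq_two_or_eq_left hy hr l)
    (heq ▸ hQ.cast_eq_mul_or_eq_neg_mul hr2 hc hs2 ht2 hz hr m)
  simp only [← cast_eq_zero_iff]
  push_cast
  grind

end IsPellSeq

end Congruences

section Bounds

lemma sub_le_or_sub_le_of_dvd {r x d : ℤ} (n : ℤ) (hd : 0 ≤ d)
    (h : r ∣ x - d ∨ r ∣ x + d) : x - n * r ≤ d ∨ (n + 1) * r - x ≤ d := by
  by_contra! hlt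
  have hr : 0 < r := by linarith
  rcases h with h | h
  · exact (Int.not_dvd_iff_lt_mul_succ _ hr).2 ⟨n, by linarith, by linarith⟩ h
  · exact (Int.not_dvd_iff_lt_mul_succ _ hr).2 ⟨n, by linarith, by linarith⟩ h

lemma lt_four_mul_of_dvd {r b n : ℤ} {m : ℕ} {D : ℝ} (hm : 2 ≤ m)
    (hlow : D < 2 * b - n * r) (hupp : D < (n + 1) * r - 2 * b)
    (h : (r ∣ 4 * m - 4 ∨ r ∣ 4 * m + 4) ∨ (r ∣ 2 * b - 4 * m ∨ r ∣ 2 * b + 4 * m)) :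
    D < 4 * m := by
  have hm' : (2 : ℤ) ≤ m := by exact_mod_cast hm
  rcases h with h | h
  · have hr : r ≤ 6 * m := by
      rcases h with h | h <;> linarith [hm', Int.le_of_dvd (by linarith) h]
    have hrℝ : (r : ℝ) ≤ 6 * m := by exact_mod_cast hr
    linarith
  · rcases sub_le_or_sub_le_of_dvd n (by positivity) h with h | h
    · have hℝ : (2 * b - n * r : ℝ) ≤ 4 * m := by exact_mod_cast h
      linarith
    · have hℝ : ((n + 1) * r - 2 * b : ℝ) ≤ 4 * m := by exact_mod_cast h
      linarith

variable {k a r : ℤ}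

lemma mul_lt_of_sq_le {α : ℝ} (hr : 0 < r) (hr2 : k * a ^ 2 + 4 = r ^ 2) (hα : α ^ 2 ≤ k) :
    α * a < r := by
  have hr2ℝ : (k : ℝ) * a ^ 2 + 4 = r ^ 2 := by exact_mod_cast hr2
  refine lt_of_pow_lt_pow_left₀ 2 (by positivity) ?_
  calc (α * a) ^ 2 = α ^ 2 * a ^ 2 := mul_pow ..
    _ ≤ k * a ^ 2 := by gcongr
    _ < r ^ 2 := by linarith

lemma lt_mul_of_le_sq {β : ℝ} (ha : 7 ≤ a) (hr2 : k * a ^ 2 + 4 = r ^ 2) (hβ₀ : 0 ≤ β)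
    (hβ : k + 1 / 10 ≤ β ^ 2) : r < β * a := by
  have hr2ℝ : (k : ℝ) * a ^ 2 + 4 = r ^ 2 := by exact_mod_cast hr2
  have haℝ : (7 : ℝ) ≤ a := by exact_mod_cast ha
  have hsq : (7 : ℝ) ^ 2 ≤ a ^ 2 := by gcongr
  refine lt_of_pow_lt_pow_left₀ 2 (by positivity) ?_
  calc (r : ℝ) ^ 2 < (k + 1 / 10) * a ^ 2 := by linarith
    _ ≤ β ^ 2 * a ^ 2 := by gcongr
    _ = (β * a) ^ 2 := (mul_pow ..).symm

lemma mul_lt_of_dvd {m n : ℕ} {α β C : ℝ} (ha : 0 < a) (hr : 0 < r)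
    (hr2 : k * a ^ 2 + 4 = r ^ 2) (hm : 2 ≤ m)
    (h : (r ∣ 4 * m - 4 ∨ r ∣ 4 * m + 4) ∨
      (r ∣ 2 * (k * a) - 4 * m ∨ r ∣ 2 * (k * a) + 4 * m))
    (hα : α ^ 2 ≤ k) (hβ₀ : 0 ≤ β) (hβ : k + 1 / 10 ≤ β ^ 2) (hn : 0 < n) (hC : C < 1 / 3)
    (hlow : 4 * C ≤ 2 * k - n * β) (hupp : 4 * C ≤ (n + 1) * α - 2 * k) :
    C * a < m := by
  have haℝ : (0 : ℝ) < a := by exact_mod_cast ha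
  rcases le_or_gt a 6 with hsmall | hlarge
  · have hsmallℝ : (a : ℝ) ≤ 6 := by exact_mod_cast hsmall
    have hmℝ : (2 : ℝ) ≤ m := by exact_mod_cast hm
    calc C * a < 1 / 3 * a := mul_lt_mul_of_pos_right hC haℝ
      _ ≤ m := by linarith
  · have hαr : α * a < r := mul_lt_of_sq_le hr hr2 hα
    have hrβ : r < β * a := lt_mul_of_le_sq hlarge hr2 hβ₀ hβ
    have hlow' : 4 * C * a < 2 * (k * a : ℤ) - (n : ℤ) * r := by
      push_cast
      calc 4 * C * a ≤ (2 * k - n * β) * a := by gcongr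
        _ = 2 * (k * a) - n * (β * a) := by ring
        _ < 2 * (k * a) - n * r := by gcongr
    have hupp' : 4 * C * a < ((n : ℤ) + 1) * r - 2 * (k * a : ℤ) := by
      push_cast
      calc 4 * C * a ≤ ((n + 1) * α - 2 * k) * a := by gcongr
        _ = (n + 1) * (α * a) - 2 * (k * a) := by ring
        _ < (n + 1) * r - 2 * (k * a) := by gcongr
    linarith [lt_four_mul_of_dvd hm hlow' hupp' h]

end Bounds

theorem lower_bound_on_m_type2_c2_general {k a r b c s t y₂ z₀ : ℤ} {P Q : ℕ → ℤ} {l m : ℕ}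
    (ha : 0 < a) (hr : 0 < r) (hr2 : k * a ^ 2 + 4 = r ^ 2) (hb : b = k * a)
    (hc : c = (a * b + 4) * (a + b + 2 * r) - 4 * r ∨
          c = (a * b + 4) * (a + b - 2 * r) + 4 * r)
    (hs2 : a * c + 4 = s ^ 2) (ht2 : b * c + 4 = t ^ 2)
    (hy₂ : y₂ = 2 ∨ y₂ = -2) (hz₀ : z₀ = t ∨ z₀ = -t)
    (hP : IsPellSeq r a 2 y₂ P) (hQ : IsPellSeq s a r z₀ Q) (hm : 2 ≤ m) (heq : P l = Q m) :
    (k = 7 → (m : ℝ) > (14 - 5 * Real.sqrt 7.1) / 4 * (a : ℝ)) ∧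
    (k = 8 → (m : ℝ) > (6 * Real.sqrt 8 - 16) / 4 * (a : ℝ)) ∧
    (k = 10 → (m : ℝ) > (20 - 6 * Real.sqrt 10.1) / 4 * (a : ℝ)) ∧
    (k = 11 → (m : ℝ) > (7 * Real.sqrt 11 - 22) / 4 * (a : ℝ)) ∧
    (k = 12 → (m : ℝ) > (7 * Real.sqrt 12 - 24) / 4 * (a : ℝ)) ∧
    (k = 13 → (m : ℝ) > (26 - 7 * Real.sqrt 13.1) / 4 * (a : ℝ)) := by
  have hdvd := hP.dvd_four_mul_of_eq hQ (by rw [← hr2, hb]; ring) hc hs2 ht2 hy₂ hz₀ heq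
  rw [hb] at hdvd
  refine ⟨?_, ?_, ?_, ?_, ?_, ?_⟩ <;> rintro rfl
  · have sq_sqrt : √7.1 ^ 2 = (7.1 : ℝ) := Real.sq_sqrt (by norm_num)
    have lt_sqrt : (2.6 : ℝ) < √7.1 := Real.lt_sqrt_of_sq_lt (by norm_num)
    apply mul_lt_of_dvd (n := 5) (α := 2.64) (β := √7.1) ha hr hr2 hm hdvd <;>
      push_cast <;> linarith
  · have sq_sqrt : √8 ^ 2 = (8 : ℝ) := Real.sq_sqrt (by norm_num)
    have sqrt_lt : √8 < (2.83 : ℝ) := (Real.sqrt_lt' (by norm_num)).2 (by norm_num)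
    apply mul_lt_of_dvd (n := 5) (α := √8) (β := 2.85) ha hr hr2 hm hdvd <;>
      push_cast <;> linarith
  · have sq_sqrt : √10.1 ^ 2 = (10.1 : ℝ) := Real.sq_sqrt (by norm_num)
    have lt_sqrt : (3.17 : ℝ) < √10.1 := Real.lt_sqrt_of_sq_lt (by norm_num)
    apply mul_lt_of_dvd (n := 6) (α := 3.16) (β := √10.1) ha hr hr2 hm hdvd <;>
      push_cast <;> linarith
  · have sq_sqrt : √11 ^ 2 = (11 : ℝ) := Real.sq_sqrt (by norm_num)
    have sqrt_lt : √11 < (3.33 : ℝ) := (Real.sqrt_lt' (by norm_num)).2 (by norm_num)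
    apply mul_lt_of_dvd (n := 6) (α := √11) (β := 3.34) ha hr hr2 hm hdvd <;>
      push_cast <;> linarith
  · have sq_sqrt : √12 ^ 2 = (12 : ℝ) := Real.sq_sqrt (by norm_num)
    have sqrt_lt : √12 < (3.47 : ℝ) := (Real.sqrt_lt' (by norm_num)).2 (by norm_num)
    apply mul_lt_of_dvd (n := 6) (α := √12) (β := 3.48) ha hr hr2 hm hdvd <;>
      push_cast <;> linarith
  · have sq_sqrt : √13.1 ^ 2 = (13.1 : ℝ) := Real.sq_sqrt (by norm_num)
    have lt_sqrt : (3.6 : ℝ) < √13.1 := Real.lt_sqrt_of_sq_lt (by norm_num)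
    apply mul_lt_of_dvd (n := 7) (α := 3.6) (β := √13.1) ha hr hr2 hm hdvd <;>
      push_cast <;> linarith

/-- For `k ∈ {7,8,10,11,12,13}`, `b = ka` and `c ∈ {c₂⁺, c₂⁻}`, with a solution of Type 2
(`x₂ = 2`, `y₂ = ±2`, `x₀ = r`, `z₀ = ±t`): if `P_l = Q_m` for some `l` and odd `m ≥ 3`,
then `m > C_k·a` with the listed constants `C_k`. -/
theorem lower_bound_on_m_type2_c2
    (k a r b c s t : ℤ)
    (hk : k ∈ ({7, 8, 10, 11, 12, 13} : Set ℤ)) (ha : 0 < a) (hr : 0 < r)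
    (hr2 : k * a ^ 2 + 4 = r ^ 2) (hb : b = k * a)
    (hc : c = (a * b + 4) * (a + b + 2 * r) - 4 * r ∨
          c = (a * b + 4) * (a + b - 2 * r) + 4 * r)
    (hs : 0 < s) (hs2 : a * c + 4 = s ^ 2) (ht : 0 < t) (ht2 : b * c + 4 = t ^ 2)
    (x₂ y₂ x₀ z₀ : ℤ)
    (hx₂ : x₂ = 2) (hy₂ : y₂ = 2 ∨ y₂ = -2) (hx₀ : x₀ = r) (hz₀ : z₀ = t ∨ z₀ = -t)
    (P Q : ℕ → ℤ)
    (hP0 : P 0 = x₂) (hP1 : 2 * P 1 = r * x₂ + a * y₂)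
    (hPrec : ∀ i : ℕ, P (i + 2) = r * P (i + 1) - P i)
    (hQ0 : Q 0 = x₀) (hQ1 : 2 * Q 1 = s * x₀ + a * z₀)
    (hQrec : ∀ i : ℕ, Q (i + 2) = s * Q (i + 1) - Q i)
    (l m : ℕ) (hmodd : Odd m) (hm : 3 ≤ m) (heq : P l = Q m) :
    (k = 7 → (m : ℝ) > (14 - 5 * Real.sqrt 7.1) / 4 * (a : ℝ)) ∧
    (k = 8 → (m : ℝ) > (6 * Real.sqrt 8 - 16) / 4 * (a : ℝ)) ∧
    (k = 10 → (m : ℝ) > (20 - 6 * Real.sqrt 10.1) / 4 * (a : ℝ)) ∧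
    (k = 11 → (m : ℝ) > (7 * Real.sqrt 11 - 22) / 4 * (a : ℝ)) ∧
    (k = 12 → (m : ℝ) > (7 * Real.sqrt 12 - 24) / 4 * (a : ℝ)) ∧
    (k = 13 → (m : ℝ) > (26 - 7 * Real.sqrt 13.1) / 4 * (a : ℝ)) := by
  subst hx₂ hx₀
  exact lower_bound_on_m_type2_c2_general ha hr hr2 hb hc hs2 ht2 hy₂ hz₀ ⟨hP0, hP1, hPrec⟩
    ⟨hQ0, hQ1, hQrec⟩ (by omega) heq
end
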